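/- arXiv:2209.15493 — 8 statements merged into one kernel-verified Lean document; each statement's English description precedes it below -/
import Mathlib

section
/- Let V be a set of n vertices and let 𝒯 be a set (no repetitions) of triangles on V having no rainbow triangle with respect to 𝒯. Then |𝒯| ≤ n²/8. -/
/-!
Call an edge of a member `t` of `𝒯` private to `t` if no other member of `𝒯` contains it.

Every `t ∈ 𝒯` has at least two private edges: otherwise two edges of `t` lie in further members
`t₁`, `t₂`, which are distinct because two edges determine a triangle, so `t` itself is rainbow
via `t₁`, `t₂`, `t` (`two_le_card_privateEdges`).

Choose exactly two private edges of each `t ∈ 𝒯`. Private edges of distinct triangles are distinct,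
so the graph `G` formed by the chosen edges has `2|𝒯|` edges. It is triangle-free: let `s` be a
triangle of `G`. If its edges were chosen for three distinct members of `𝒯`, then `s` is rainbow.
If two of them were chosen for the same member, that member is `s`, so the third edge, being
private, was also chosen for `s`, although only two edges of `s` were chosen.
Mantel's theorem now gives `2|𝒯| ≤ n²/4`.
-/

/-- A family `𝒯` of triangles (3-element vertex subsets) has a rainbow triangle if there is
a triangle `s` together with three pairwise distinct members `t₁, t₂, t₃` of `𝒯` such that
the three edges (2-element subsets) of `s` can be enumerated `e₁, e₂, e₃` with `eᵢ ⊆ tᵢ`. -/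
def HasRainbowTriangle {V : Type*} (𝒯 : Finset (Finset V)) : Prop :=
  ∃ s e₁ e₂ e₃ t₁ t₂ t₃ : Finset V,
    s.card = 3 ∧
    t₁ ∈ 𝒯 ∧ t₂ ∈ 𝒯 ∧ t₃ ∈ 𝒯 ∧
    t₁ ≠ t₂ ∧ t₁ ≠ t₃ ∧ t₂ ≠ t₃ ∧
    e₁ ≠ e₂ ∧ e₁ ≠ e₃ ∧ e₂ ≠ e₃ ∧
    e₁.card = 2 ∧ e₂.card = 2 ∧ e₃.card = 2 ∧
    e₁ ⊆ s ∧ e₂ ⊆ s ∧ e₃ ⊆ s ∧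
    e₁ ⊆ t₁ ∧ e₂ ⊆ t₂ ∧ e₃ ⊆ t₃

/-- The edges of `t` contained in no member of `𝒯` other than `t`. -/
def privateEdges {V : Type*} [DecidableEq V] (𝒯 : Finset (Finset V)) (t : Finset V) :
    Finset (Finset V) :=
  (t.powersetCard 2).filter fun e => ∀ t' ∈ 𝒯, e ⊆ t' → t' = t

lemma mem_privateEdges {V : Type*} [DecidableEq V] {𝒯 : Finset (Finset V)} {t e : Finset V} :
    e ∈ privateEdges 𝒯 t ↔ (e ⊆ t ∧ e.card = 2) ∧ ∀ t' ∈ 𝒯, e ⊆ t' → t' = t := by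
  simp [privateEdges, Finset.mem_powersetCard]

/-- A triangle is the union of any two of its edges. -/
lemma union_edges_eq {V : Type*} [DecidableEq V] {t e₁ e₂ : Finset V} (ht : t.card = 3)
    (h₁ : e₁.card = 2) (h₂ : e₂.card = 2) (hne : e₁ ≠ e₂) (hs₁ : e₁ ⊆ t) (hs₂ : e₂ ⊆ t) :
    e₁ ∪ e₂ = t := by
  refine Finset.eq_of_subset_of_card_le (Finset.union_subset hs₁ hs₂) ?_
  by_contra! hlt
  have h : e₁ = e₁ ∪ e₂ :=
    Finset.eq_of_subset_of_card_le Finset.subset_union_left (by omega)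
  have h' : e₂ = e₁ ∪ e₂ :=
    Finset.eq_of_subset_of_card_le Finset.subset_union_right (by omega)
  exact hne (h.trans h'.symm)

/-- Two triangles with two common edges coincide. -/
lemma eq_of_two_common_edges {V : Type*} [DecidableEq V] {t t' e₁ e₂ : Finset V}
    (ht : t.card = 3) (ht' : t'.card = 3) (h₁ : e₁.card = 2) (h₂ : e₂.card = 2) (hne : e₁ ≠ e₂)
    (hs₁ : e₁ ⊆ t) (hs₂ : e₂ ⊆ t) (hs₁' : e₁ ⊆ t') (hs₂' : e₂ ⊆ t') : t = t' :=
  (union_edges_eq ht h₁ h₂ hne hs₁ hs₂).symm.trans (union_edges_eq ht' h₁ h₂ hne hs₁' hs₂')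

lemma two_le_card_privateEdges {V : Type*} [DecidableEq V] {𝒯 : Finset (Finset V)}
    (htri : ∀ t ∈ 𝒯, t.card = 3) (hnr : ¬ HasRainbowTriangle 𝒯) {t : Finset V} (ht : t ∈ 𝒯) :
    2 ≤ (privateEdges 𝒯 t).card := by
  by_contra! hlt
  have h3 : (t.powersetCard 2).card = 3 := by
    rw [Finset.card_powersetCard, htri t ht]; rfl
  have hsub : privateEdges 𝒯 t ⊆ t.powersetCard 2 := Finset.filter_subset _ _
  have hcard := Finset.card_sdiff_add_card_eq_card hsub
  obtain ⟨e₁, he₁, e₂, he₂, hne⟩ :=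
    Finset.one_lt_card.1 (show 1 < (t.powersetCard 2 \ privateEdges 𝒯 t).card by omega)
  have hpair : ({e₁, e₂} : Finset (Finset V)).card = 2 := Finset.card_pair hne
  obtain ⟨e₃, he₃, hne₃⟩ := Finset.exists_mem_notMem_of_card_lt_card
    (show ({e₁, e₂} : Finset (Finset V)).card < (t.powersetCard 2).card by omega)
  simp only [Finset.mem_sdiff, mem_privateEdges, Finset.mem_powersetCard] at he₁ he₂ he₃
  simp only [Finset.mem_insert, Finset.mem_singleton, not_or] at hne₃
  obtain ⟨⟨hs₁, hc₁⟩, hp₁⟩ := he₁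
  obtain ⟨⟨hs₂, hc₂⟩, hp₂⟩ := he₂
  have hex₁ : ∃ t' ∈ 𝒯, e₁ ⊆ t' ∧ t' ≠ t := by
    by_contra! h; exact hp₁ ⟨⟨hs₁, hc₁⟩, h⟩
  have hex₂ : ∃ t' ∈ 𝒯, e₂ ⊆ t' ∧ t' ≠ t := by
    by_contra! h; exact hp₂ ⟨⟨hs₂, hc₂⟩, h⟩
  obtain ⟨t₁, ht₁, het₁, hne₁⟩ := hex₁
  obtain ⟨t₂, ht₂, het₂, hne₂⟩ := hex₂
  have h12 : t₁ ≠ t₂ := by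
    rintro rfl
    exact hne₁ (eq_of_two_common_edges (htri _ ht₁) (htri _ ht) hc₁ hc₂ hne het₁ het₂ hs₁ hs₂)
  exact hnr ⟨t, e₁, e₂, e₃, t₁, t₂, t, htri t ht, ht₁, ht₂, ht, h12, hne₁, hne₂, hne,
    Ne.symm hne₃.1, Ne.symm hne₃.2, hc₁, hc₂, he₃.2, hs₁, hs₂, he₃.1, het₁, het₂, he₃.1⟩

/-- If exactly two private edges are selected from each member of `𝒯`, then three selected edges
of one triangle `s`, two of which are selected for the same member, cannot exist. -/
lemma false_of_eq_owner {V : Type*} [DecidableEq V] {𝒯 : Finset (Finset V)}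
    (htri : ∀ t ∈ 𝒯, t.card = 3) {C : Finset V → Finset (Finset V)}
    (hC : ∀ t ∈ 𝒯, C t ⊆ privateEdges 𝒯 t ∧ (C t).card = 2)
    {s e₁ e₂ e₃ t t₃ : Finset V} (hs : s.card = 3) (ht : t ∈ 𝒯)
    (h₁ : e₁ ∈ C t) (h₂ : e₂ ∈ C t) (h₃ : e₃ ∈ C t₃) (ht₃ : t₃ ∈ 𝒯)
    (h12 : e₁ ≠ e₂) (h13 : e₁ ≠ e₃) (h23 : e₂ ≠ e₃)
    (hs₁ : e₁ ⊆ s) (hs₂ : e₂ ⊆ s) (hs₃ : e₃ ⊆ s) : False := by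
  have p₁ := mem_privateEdges.1 ((hC t ht).1 h₁)
  have p₂ := mem_privateEdges.1 ((hC t ht).1 h₂)
  have p₃ := mem_privateEdges.1 ((hC t₃ ht₃).1 h₃)
  have hst : s = t :=
    eq_of_two_common_edges hs (htri t ht) p₁.1.2 p₂.1.2 h12 hs₁ hs₂ p₁.1.1 p₂.1.1
  have htt : t = t₃ := p₃.2 t ht (hst ▸ hs₃)
  subst htt
  have hle : ({e₁, e₂, e₃} : Finset (Finset V)).card ≤ (C t).card :=
    Finset.card_le_card (by simp [Finset.insert_subset_iff, h₁, h₂, h₃])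
  rw [Finset.card_eq_three.2 ⟨e₁, e₂, e₃, h12, h13, h23, rfl⟩, (hC t ht).2] at hle
  omega

/-- Mantel's theorem. -/
lemma four_mul_card_edgeFinset_le {V : Type*} [Fintype V] (G : SimpleGraph V)
    [DecidableRel G.Adj] (h : G.CliqueFree 3) :
    4 * G.edgeFinset.card ≤ (Fintype.card V) ^ 2 := by
  have hT := SimpleGraph.CliqueFree.card_edgeFinset_le (r := 2) h
  simp only at hT
  rcases Nat.mod_two_eq_zero_or_one (Fintype.card V) with hm | hm
  · rw [hm] at hT
    simp at hT
    omega
  · rw [hm] at hT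
    simp at hT
    omega

/-- A set of triangles on `n` vertices with no rainbow triangle has size at most `n²/8`. -/
theorem card_le_of_no_rainbow_triangle
    {V : Type*} [Fintype V] [DecidableEq V]
    (𝒯 : Finset (Finset V))
    (htri : ∀ t ∈ 𝒯, t.card = 3)
    (hnr : ¬ HasRainbowTriangle 𝒯) :
    8 * 𝒯.card ≤ (Fintype.card V) ^ 2 := by
  classical
  have hex : ∀ t, ∃ C : Finset (Finset V), t ∈ 𝒯 → C ⊆ privateEdges 𝒯 t ∧ C.card = 2 := by
    intro t
    by_cases ht : t ∈ 𝒯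
    · obtain ⟨C, h⟩ := Finset.exists_subset_card_eq (two_le_card_privateEdges htri hnr ht)
      exact ⟨C, fun _ => h⟩
    · exact ⟨∅, fun h => absurd h ht⟩
  choose C hC using hex
  have hEcard : (𝒯.biUnion C).card = 2 * 𝒯.card := by
    rw [Finset.card_biUnion, Finset.sum_congr rfl fun t ht => (hC t ht).2]
    · simp [mul_comm]
    · intro t ht t' ht' hne
      refine Finset.disjoint_left.2 fun e he he' => hne ?_
      have p := mem_privateEdges.1 ((hC t ht).1 he)
      have p' := mem_privateEdges.1 ((hC t' ht').1 he')
      exact p'.2 t ht p.1.1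
  let G : SimpleGraph V :=
    { Adj := fun a b => a ≠ b ∧ ({a, b} : Finset V) ∈ 𝒯.biUnion C
      symm := ⟨fun a b h => ⟨h.1.symm, by rw [Finset.pair_comm]; exact h.2⟩⟩
      loopless := ⟨fun a h => h.1 rfl⟩ }
  have hle : (𝒯.biUnion C).card ≤ G.edgeFinset.card := by
    refine (Finset.card_le_card ?_).trans
      (Finset.card_image_le (s := G.edgeFinset) (f := Sym2.toFinset))
    intro e he
    obtain ⟨t, ht, het⟩ := Finset.mem_biUnion.1 he
    obtain ⟨a, b, hab, rfl⟩ := Finset.card_eq_two.1 (mem_privateEdges.1 ((hC t ht).1 het)).1.2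
    refine Finset.mem_image.2 ⟨s(a, b), ?_, by ext; simp⟩
    rw [SimpleGraph.mem_edgeFinset, SimpleGraph.mem_edgeSet]
    exact ⟨hab, he⟩
  have hfree : G.CliqueFree 3 := by
    intro s hs
    obtain ⟨a, b, c, ⟨hab, h₁⟩, ⟨hac, h₂⟩, ⟨hbc, h₃⟩, rfl⟩ := SimpleGraph.is3Clique_iff.1 hs
    obtain ⟨t₁, ht₁, h₁⟩ := Finset.mem_biUnion.1 h₁
    obtain ⟨t₂, ht₂, h₂⟩ := Finset.mem_biUnion.1 h₂
    obtain ⟨t₃, ht₃, h₃⟩ := Finset.mem_biUnion.1 h₃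
    have n12 : ({a, b} : Finset V) ≠ {a, c} := fun h => by
      have : b ∈ ({a, c} : Finset V) := h ▸ (by simp)
      simp [hab.symm, hbc] at this
    have n13 : ({a, b} : Finset V) ≠ {b, c} := fun h => by
      have : a ∈ ({b, c} : Finset V) := h ▸ (by simp)
      simp [hab, hac] at this
    have n23 : ({a, c} : Finset V) ≠ {b, c} := fun h => by
      have : a ∈ ({b, c} : Finset V) := h ▸ (by simp)
      simp [hab, hac] at this
    have s₁ : ({a, b} : Finset V) ⊆ {a, b, c} := by intro x; simp; tauto
    have s₂ : ({a, c} : Finset V) ⊆ {a, b, c} := by intro x; simp; tauto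
    have s₃ : ({b, c} : Finset V) ⊆ {a, b, c} := by intro x; simp; tauto
    have hs3 : ({a, b, c} : Finset V).card = 3 := hs.card_eq
    by_cases h12 : t₁ = t₂
    · subst h12
      exact false_of_eq_owner htri hC hs3 ht₁ h₁ h₂ h₃ ht₃ n12 n13 n23 s₁ s₂ s₃
    by_cases h13 : t₁ = t₃
    · subst h13
      exact false_of_eq_owner htri hC hs3 ht₁ h₁ h₃ h₂ ht₂ n13 n12 n23.symm s₁ s₃ s₂
    by_cases h23 : t₂ = t₃
    · subst h23
      exact false_of_eq_owner htri hC hs3 ht₂ h₂ h₃ h₁ ht₁ n23 n12.symm n13.symm s₂ s₃ s₁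
    have p₁ := (mem_privateEdges.1 ((hC t₁ ht₁).1 h₁)).1
    have p₂ := (mem_privateEdges.1 ((hC t₂ ht₂).1 h₂)).1
    have p₃ := (mem_privateEdges.1 ((hC t₃ ht₃).1 h₃)).1
    exact hnr ⟨{a, b, c}, {a, b}, {a, c}, {b, c}, t₁, t₂, t₃, hs3, ht₁, ht₂, ht₃, h12, h13, h23,
      n12, n13, n23, p₁.2, p₂.2, p₃.2, s₁, s₂, s₃, p₁.1, p₂.1, p₃.1⟩
  have := four_mul_card_edgeFinset_le G hfree
  omega
end

section
/- Let n be a positive integer divisible by 4 and let 𝒯 be a set of exactly n²/8 triangles on an n-element vertex set V having no rainbow triangle with respect to 𝒯. Then 𝒯 is isomorphic to 𝒯*_n; concretely, there exist n/4 pairwise disjoint 2-element subsets P₁, …, P_{n/4} of V and a set W of n/2 vertices of V disjoint from all the Pᵢ, such that 𝒯 consists precisely of the triangles Pᵢ ∪ {w} for 1 ≤ i ≤ n/4 and w ∈ W. -/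
open Finset

/-- Three edges of a triangle `a b c` cannot lie in three distinct members of the family. -/
lemma rainbow_absurd {V : Type*} [DecidableEq V] {𝒯 : Finset (Finset V)}
    (hnr : ¬ HasRainbowTriangle 𝒯) {a b c : V} (hab : a ≠ b) (hac : a ≠ c) (hbc : b ≠ c)
    {t₁ t₂ t₃ : Finset V} (h₁ : t₁ ∈ 𝒯) (h₂ : t₂ ∈ 𝒯) (h₃ : t₃ ∈ 𝒯)
    (h₁₂ : t₁ ≠ t₂) (h₁₃ : t₁ ≠ t₃) (h₂₃ : t₂ ≠ t₃)
    (ha₁ : a ∈ t₁) (hb₁ : b ∈ t₁) (hb₂ : b ∈ t₂) (hc₂ : c ∈ t₂) (ha₃ : a ∈ t₃) (hc₃ : c ∈ t₃) :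
    False := by
  have mem_ne {e f : Finset V} (x : V) (hx : x ∈ e) (hx' : x ∉ f) : e ≠ f := by
    rintro rfl; exact hx' hx
  refine hnr ⟨{a, b, c}, {a, b}, {b, c}, {a, c}, t₁, t₂, t₃, card_eq_three.2 ⟨a, b, c, hab, hac,
    hbc, rfl⟩, h₁, h₂, h₃, h₁₂, h₁₃, h₂₃, mem_ne a ?_ ?_, mem_ne b ?_ ?_, mem_ne b ?_ ?_,
    card_pair hab, card_pair hbc, card_pair hac, ?_, ?_, ?_, ?_, ?_, ?_⟩ <;>
  simp [insert_subset_iff, *, hab.symm, hbc.symm]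

lemma eq_triple {V : Type*} [DecidableEq V] {t : Finset V} (ht : t.card = 3)
    {a b c : V} (hab : a ≠ b) (hac : a ≠ c) (hbc : b ≠ c)
    (ha : a ∈ t) (hb : b ∈ t) (hc : c ∈ t) : t = {a, b, c} := by
  symm
  apply eq_of_subset_of_card_le
  · simp [insert_subset_iff, *]
  · rw [ht, card_eq_three.2 ⟨a, b, c, hab, hac, hbc, rfl⟩]

/-- Every triangle of the graph of covered edges belongs to the family: covering triangles of
its three edges are either pairwise distinct, giving a rainbow triangle, or one of them contains
two of the edges and hence is the triangle itself. -/
lemma triple_mem {V : Type*} [DecidableEq V] {𝒯 : Finset (Finset V)}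
    (htri : ∀ t ∈ 𝒯, t.card = 3)
    (hnr : ¬ HasRainbowTriangle 𝒯) {a b c : V} (hab : a ≠ b) (hac : a ≠ c) (hbc : b ≠ c)
    {t₁ t₂ t₃ : Finset V} (h₁ : t₁ ∈ 𝒯) (h₂ : t₂ ∈ 𝒯) (h₃ : t₃ ∈ 𝒯)
    (ha₁ : a ∈ t₁) (hb₁ : b ∈ t₁) (hb₂ : b ∈ t₂) (hc₂ : c ∈ t₂) (ha₃ : a ∈ t₃) (hc₃ : c ∈ t₃) :
    {a, b, c} ∈ 𝒯 := by
  by_cases h₁₂ : t₁ = t₂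
  · subst h₁₂; rwa [← eq_triple (htri _ h₁) hab hac hbc ha₁ hb₁ hc₂]
  by_cases h₁₃ : t₁ = t₃
  · subst h₁₃; rwa [← eq_triple (htri _ h₁) hab hac hbc ha₁ hb₁ hc₃]
  by_cases h₂₃ : t₂ = t₃
  · subst h₂₃; rwa [← eq_triple (htri _ h₂) hab hac hbc ha₃ hb₂ hc₂]
  exact (rainbow_absurd hnr hab hac hbc h₁ h₂ h₃ h₁₂ h₁₃ h₂₃ ha₁ hb₁ hb₂ hc₂ ha₃ hc₃).elim

/-- At most one edge of a member `t` is shared with other members. The vertex `x` opposite to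
it is such that both edges of `t` at `x` lie in no other member. -/
lemma exists_apex {V : Type*} [DecidableEq V] {𝒯 : Finset (Finset V)}
    (htri : ∀ t ∈ 𝒯, t.card = 3) (hnr : ¬ HasRainbowTriangle 𝒯)
    (t : Finset V) (ht : t ∈ 𝒯) :
    ∃ x ∈ t, ∀ y ∈ t, y ≠ x → ∀ t' ∈ 𝒯, x ∈ t' → y ∈ t' → t' = t := by
  -- Edges `ab` and `ac` that are both shared would give a rainbow triangle together with `t`.
  have key : ∀ a b c, a ∈ t → b ∈ t → c ∈ t → a ≠ b → a ≠ c → b ≠ c → ∀ t₁ ∈ 𝒯, ∀ t₂ ∈ 𝒯,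
      t₁ ≠ t → t₂ ≠ t → a ∈ t₁ → b ∈ t₁ → a ∈ t₂ → c ∈ t₂ → False := by
    intro a b c ha hb hc hab hac hbc t₁ h₁ t₂ h₂ n₁ n₂ ha₁ hb₁ ha₂ hc₂
    refine rainbow_absurd hnr hab hac hbc h₁ ht h₂ n₁ ?_ n₂.symm ha₁ hb₁ hb hc ha₂ hc₂
    rintro rfl
    exact n₁ ((eq_triple (htri _ h₁) hab hac hbc ha₁ hb₁ hc₂).trans
      (eq_triple (htri _ ht) hab hac hbc ha hb hc).symm)
  by_contra! hcon
  obtain ⟨a, b, c, hab, hac, hbc, habc⟩ := card_eq_three.1 (htri t ht)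
  have ha : a ∈ t := by simp [habc]
  have hb : b ∈ t := by simp [habc]
  have hc : c ∈ t := by simp [habc]
  have mt : ∀ y ∈ t, y = a ∨ y = b ∨ y = c := by simp [habc]
  obtain ⟨y₁, hy₁, hn₁, t₁, h₁, hx₁, hyt₁, ne₁⟩ := hcon a ha
  obtain ⟨y₂, hy₂, hn₂, t₂, h₂, hx₂, hyt₂, ne₂⟩ := hcon b hb
  obtain ⟨y₃, hy₃, hn₃, t₃, h₃, hx₃, hyt₃, ne₃⟩ := hcon c hc
  have ka := key a b c ha hb hc hab hac hbc
  have kb := key b a c hb ha hc hab.symm hbc hac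
  have kc := key c a b hc ha hb hac.symm hbc.symm hab
  rcases mt _ hy₁ with rfl | rfl | rfl
  · exact hn₁ rfl
  · rcases mt _ hy₃ with rfl | rfl | rfl
    · exact ka _ h₁ _ h₃ ne₁ ne₃ hx₁ hyt₁ hyt₃ hx₃
    · exact kb _ h₁ _ h₃ ne₁ ne₃ hyt₁ hx₁ hyt₃ hx₃
    · exact hn₃ rfl
  · rcases mt _ hy₂ with rfl | rfl | rfl
    · exact ka _ h₂ _ h₁ ne₂ ne₁ hyt₂ hx₂ hx₁ hyt₁
    · exact hn₂ rfl
    · exact kc _ h₁ _ h₂ ne₁ ne₂ hyt₁ hx₁ hyt₂ hx₂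

/-- Mantel's theorem with its equality case: a triangle-free graph on `4 * k` vertices with at
least `(4 * k)² / 4` edges is complete bipartite with parts (the fibres of `c`) of equal size. -/
lemma mantel_equality {V : Type*} [Fintype V] [DecidableEq V] (H : SimpleGraph V)
    [DecidableRel H.Adj] {k : ℕ} (hk : Fintype.card V = 4 * k) (hfree : H.CliqueFree 3)
    (hE : 4 * k ^ 2 ≤ #H.edgeFinset) :
    ∃ c : V → Bool, (∀ u v, H.Adj u v ↔ c u ≠ c v) ∧ ∀ b, #{v | c v = b} = 2 * k := by
  have hmax : H.IsTuranMaximal 2 := by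
    refine ⟨hfree, fun G' _ hG' => ?_⟩
    have h := hG'.card_edgeFinset_le
    simp only [hk] at h
    refine le_trans ?_ hE
    have e : (4 * k) % 2 = 0 := by omega
    rw [e] at h
    simp at h
    have e2 : (4 * k) ^ 2 / (2 * 2) = 4 * k ^ 2 := by
      rw [show (4 * k) ^ 2 = 4 * k ^ 2 * (2 * 2) by ring]; simp
    omega
  obtain ⟨f⟩ := (SimpleGraph.isTuranMaximal_iff_nonempty_iso_turanGraph (by norm_num)).1 hmax
  have hcount : ∀ m, #{i ∈ range (4 * m) | i % 2 = 0} = 2 * m := by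
    intro m
    induction m with
    | zero => simp
    | succ m ih =>
      rw [show 4 * (m + 1) = 4 * m + 1 + 1 + 1 + 1 by ring]
      simp only [range_add_one, filter_insert]
      have h0 : (4 * m) % 2 = 0 := by omega
      have h1 : (4 * m + 1) % 2 ≠ 0 := by omega
      have h2 : (4 * m + 1 + 1) % 2 = 0 := by omega
      have h3 : (4 * m + 1 + 1 + 1) % 2 ≠ 0 := by omega
      simp [h0, h1, h2, h3, ih]
      omega
  have htrue : #{v | decide ((f v : ℕ) % 2 = 0) = true} = 2 * k := by
    rw [← hcount k]
    refine card_bij (fun v _ => (f v : ℕ)) ?_ ?_ ?_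
    · intro v hv
      have := (f v).2
      simp at hv
      simp [hv]; omega
    · intro u _ v _ h
      exact f.injective (Fin.ext h)
    · intro i hi
      simp at hi
      exact ⟨f.symm ⟨i, by omega⟩, by simp [hi.2], by simp⟩
  refine ⟨fun v => decide ((f v : ℕ) % 2 = 0), ?_, ?_⟩
  · intro u v
    rw [← f.map_adj_iff]
    simp only [SimpleGraph.turanGraph, ne_eq, decide_eq_decide]
    omega
  · intro b
    cases b
    · have := card_filter_add_card_filter_not (s := (univ : Finset V))
        (fun v => decide ((f v : ℕ) % 2 = 0) = true)
      simp only [htrue, card_univ, Bool.not_eq_true] at this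
      beta_reduce
      omega
    · exact htrue

/-- The conclusion once the complete bipartite graph is known. The vertex `x t` is the
apex of `t`, so that `t.erase (x t)` is its spine, and all apices lie in the class `c v = b`. -/
lemma structure_of_bipartite {V : Type*} [Fintype V] [DecidableEq V] {k : ℕ} (hpos : 0 < k)
    (𝒯 : Finset (Finset V)) (htri : ∀ t ∈ 𝒯, t.card = 3) (hnr : ¬ HasRainbowTriangle 𝒯)
    (x : Finset V → V) (hx : ∀ t ∈ 𝒯, x t ∈ t)
    (c : V → Bool) (hc : ∀ b, #{v | c v = b} = 2 * k)
    (hcov : ∀ u v, c u ≠ c v → ∃ t ∈ 𝒯, u ∈ t ∧ v ∈ t ∧ (x t = u ∨ x t = v))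
    (hpriv : ∀ u v, c u ≠ c v → ∀ t ∈ 𝒯, ∀ t' ∈ 𝒯, u ∈ t → v ∈ t → u ∈ t' → v ∈ t' → t = t')
    (hopp : ∀ t ∈ 𝒯, ∀ y ∈ t, y ≠ x t → c y ≠ c (x t))
    (b : Bool) (hb : ∀ t ∈ 𝒯, c (x t) = b) :
    ∃ (P : Finset (Finset V)) (W : Finset V),
      P.card = k ∧
      (∀ p ∈ P, p.card = 2) ∧
      (∀ p ∈ P, ∀ q ∈ P, p ≠ q → Disjoint p q) ∧
      W.card = 2 * k ∧
      (∀ p ∈ P, Disjoint p W) ∧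
      (∀ t : Finset V, t ∈ 𝒯 ↔ ∃ p ∈ P, ∃ w ∈ W, t = insert w p) := by
  have hpc : ∀ t ∈ 𝒯, ∀ y ∈ t.erase (x t), c y ≠ b := by
    intro t ht y hy
    rw [mem_erase] at hy
    rw [← hb t ht]
    exact hopp t ht y hy.2 hy.1
  have hins : ∀ t ∈ 𝒯, ∀ w, c w = b → insert w (t.erase (x t)) ∈ 𝒯 := by
    intro t ht w hw
    have h2 : #(t.erase (x t)) = 2 := by rw [card_erase_of_mem (hx t ht), htri t ht]
    obtain ⟨y, z, hyz, he⟩ := card_eq_two.1 h2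
    have hy : c y ≠ b := hpc t ht y (by simp [he])
    have hz : c z ≠ b := hpc t ht z (by simp [he])
    have hyt : y ∈ t := mem_of_mem_erase (a := x t) (by simp [he])
    have hzt : z ∈ t := mem_of_mem_erase (a := x t) (by simp [he])
    obtain ⟨t₁, h₁, hw₁, hy₁, -⟩ := hcov w y (by rw [hw]; exact hy.symm)
    obtain ⟨t₂, h₂, hw₂, hz₂, -⟩ := hcov w z (by rw [hw]; exact hz.symm)
    rw [he]
    exact triple_mem htri hnr (by rintro rfl; exact hy hw) (by rintro rfl; exact hz hw) hyz
      h₁ ht h₂ hw₁ hy₁ hyt hzt hw₂ hz₂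
  have hW : ∃ w, c w = b := by
    have : 0 < #{v | c v = b} := by rw [hc]; omega
    obtain ⟨w, hw⟩ := card_pos.1 this
    exact ⟨w, by simpa using hw⟩
  have h2 : ∀ p ∈ 𝒯.image (fun t => t.erase (x t)), p.card = 2 := by
    simp only [forall_mem_image]
    intro t ht
    rw [card_erase_of_mem (hx t ht), htri t ht]
  have hdisj : ∀ p ∈ 𝒯.image (fun t => t.erase (x t)), ∀ q ∈ 𝒯.image (fun t => t.erase (x t)),
      p ≠ q → Disjoint p q := by
    simp only [forall_mem_image]
    intro t ht s hs hne
    rw [Finset.disjoint_left]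
    intro a hat has
    apply hne
    obtain ⟨w, hw⟩ := hW
    have hwt : w ∉ t.erase (x t) := fun h => hpc t ht w h hw
    have hws : w ∉ s.erase (x s) := fun h => hpc s hs w h hw
    have := hpriv a w (by rw [hw]; exact hpc t ht a hat) _ (hins t ht w hw) _ (hins s hs w hw)
      (mem_insert_of_mem hat) (mem_insert_self _ _) (mem_insert_of_mem has) (mem_insert_self _ _)
    rw [← erase_insert hwt, this, erase_insert hws]
  refine ⟨𝒯.image (fun t => t.erase (x t)), ({v | c v = b} : Finset V), ?_, h2, hdisj, hc b, ?_, ?_⟩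
  · have hU : (𝒯.image (fun t => t.erase (x t))).biUnion id =
        ({v | c v = !b} : Finset V) := by
      ext a
      simp only [mem_biUnion, mem_image, id, exists_exists_and_eq_and, mem_filter, mem_univ,
        true_and]
      constructor
      · rintro ⟨t, ht, ha⟩
        have := hpc t ht a ha
        cases h : c a <;> cases b <;> simp_all
      · intro ha
        obtain ⟨w, hw⟩ := hW
        have haw : c a ≠ c w := by rw [ha, hw]; simp
        obtain ⟨t, ht, hat, hwt, h⟩ := hcov a w haw
        refine ⟨t, ht, mem_erase.2 ⟨?_, hat⟩⟩
        rintro rfl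
        rw [hb t ht] at ha
        simp at ha
    have hcardU := congrArg card hU
    rw [hc, card_biUnion (t := id) (fun p hp q hq => hdisj p hp q hq),
      sum_congr rfl (f := fun p => #(id p)) (g := fun _ => 2) (fun p hp => h2 p hp)]
      at hcardU
    simp at hcardU
    omega
  · simp only [forall_mem_image]
    intro t ht
    rw [Finset.disjoint_left]
    intro a ha haw
    exact hpc t ht a ha (by simpa using haw)
  · intro t
    simp only [mem_image, exists_exists_and_eq_and, mem_filter, mem_univ, true_and]
    constructor
    · intro ht
      exact ⟨t, ht, x t, hb t ht, (insert_erase (hx t ht)).symm⟩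
    · rintro ⟨s, hs, w, hw, rfl⟩
      exact hins s hs w hw

/-- Uniqueness of the extremal family: a rainbow-triangle-free set of exactly `n²/8`
triangles on `n` vertices (with `4 ∣ n`) must be of the form `𝒯*_n`: there are `n/4`
pairwise disjoint pairs `P` and a set `W` of `n/2` further vertices such that `𝒯`
consists precisely of the triangles `p ∪ {w}` for `p ∈ P`, `w ∈ W`. -/
theorem extremal_family_characterization
    {V : Type*} [Fintype V] [DecidableEq V] {n : ℕ}
    (hn : Fintype.card V = n) (hpos : 0 < n) (hdvd : 4 ∣ n)
    (𝒯 : Finset (Finset V))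
    (htri : ∀ t ∈ 𝒯, t.card = 3)
    (hcard : 8 * 𝒯.card = n ^ 2)
    (hnr : ¬ HasRainbowTriangle 𝒯) :
    ∃ (P : Finset (Finset V)) (W : Finset V),
      P.card = n / 4 ∧
      (∀ p ∈ P, p.card = 2) ∧
      (∀ p ∈ P, ∀ q ∈ P, p ≠ q → Disjoint p q) ∧
      W.card = n / 2 ∧
      (∀ p ∈ P, Disjoint p W) ∧
      (∀ t : Finset V, t ∈ 𝒯 ↔ ∃ p ∈ P, ∃ w ∈ W, t = insert w p) := by
  classical
  obtain ⟨k, rfl⟩ := hdvd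
  have hk : 0 < k := by omega
  rw [show 4 * k / 4 = k by omega, show 4 * k / 2 = 2 * k by omega]
  have hcard' : #𝒯 = 2 * k ^ 2 := by
    have : 8 * #𝒯 = 8 * (2 * k ^ 2) := by rw [hcard]; ring
    omega
  have hne : Nonempty V := Fintype.card_pos_iff.1 (by omega)
  have hex : ∀ t, ∃ x, t ∈ 𝒯 → x ∈ t ∧ ∀ y ∈ t, y ≠ x → ∀ t' ∈ 𝒯, x ∈ t' → y ∈ t' → t' = t := by
    intro t
    by_cases ht : t ∈ 𝒯
    · obtain ⟨x, h⟩ := exists_apex htri hnr t ht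
      exact ⟨x, fun _ => h⟩
    · exact ⟨hne.some, fun h => (ht h).elim⟩
  choose x hx' using hex
  have hx : ∀ t ∈ 𝒯, x t ∈ t := fun t ht => (hx' t ht).1
  have hxp : ∀ t ∈ 𝒯, ∀ y ∈ t, y ≠ x t → ∀ t' ∈ 𝒯, x t ∈ t' → y ∈ t' → t' = t :=
    fun t ht => (hx' t ht).2
  let H : SimpleGraph V :=
    { Adj := fun u v => u ≠ v ∧ ∃ t ∈ 𝒯, u ∈ t ∧ v ∈ t ∧ (x t = u ∨ x t = v)
      symm := ⟨fun u v ⟨h, t, ht, hu, hv, hor⟩ => ⟨h.symm, t, ht, hv, hu, hor.symm⟩⟩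
      loopless := ⟨fun u h => h.1 rfl⟩ }
  have hHpriv : ∀ u v, H.Adj u v → ∃ t ∈ 𝒯, u ∈ t ∧ v ∈ t ∧ (x t = u ∨ x t = v) ∧
      ∀ t' ∈ 𝒯, u ∈ t' → v ∈ t' → t' = t := by
    rintro u v ⟨h, t, ht, hu, hv, hor⟩
    refine ⟨t, ht, hu, hv, hor, fun t' ht' hu' hv' => ?_⟩
    rcases hor with rfl | rfl
    · exact hxp t ht v hv h.symm t' ht' hu' hv'
    · exact hxp t ht u hu h t' ht' hv' hu'
  have hfree : H.CliqueFree 3 := by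
    intro s hs
    obtain ⟨a, b, c, hab, hac, hbc, rfl⟩ := SimpleGraph.is3Clique_iff.1 hs
    obtain ⟨t₁, h₁, ha₁, hb₁, o₁, u₁⟩ := hHpriv _ _ hab
    obtain ⟨t₂, h₂, hb₂, hc₂, o₂, u₂⟩ := hHpriv _ _ hbc
    obtain ⟨t₃, h₃, ha₃, hc₃, o₃, u₃⟩ := hHpriv _ _ hac
    have nab := hab.ne
    have nac := hac.ne
    have nbc := hbc.ne
    have hm := triple_mem htri hnr nab nac nbc h₁ h₂ h₃ ha₁ hb₁ hb₂ hc₂ ha₃ hc₃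
    -- All three covering members are `{a, b, c}`, whose apex would have to lie on all its edges.
    have e₁ := u₁ _ hm (by simp) (by simp)
    have e₂ := u₂ _ hm (by simp) (by simp)
    have e₃ := u₃ _ hm (by simp) (by simp)
    rw [← e₁] at o₁
    rw [← e₂] at o₂
    rw [← e₃] at o₃
    grind
  have hE : 4 * k ^ 2 ≤ #H.edgeFinset := by
    have hS : #(𝒯.sigma fun t => t.erase (x t)) = 4 * k ^ 2 := by
      rw [card_sigma, sum_congr rfl (fun t ht => by
        rw [card_erase_of_mem (hx t ht), htri t ht])]
      simp [hcard']
      omega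
    rw [← hS]
    refine card_le_card_of_injOn (fun p => s(x p.1, p.2)) ?_ ?_
    · rintro ⟨t, y⟩ hp
      simp only [coe_sigma, Set.mem_sigma_iff, mem_coe, mem_erase] at hp
      simp only [SimpleGraph.coe_edgeFinset, SimpleGraph.mem_edgeSet]
      exact ⟨hp.2.1.symm, t, hp.1, hx t hp.1, hp.2.2, Or.inl rfl⟩
    · rintro ⟨t, y⟩ hp ⟨t', y'⟩ hp' heq
      simp only [coe_sigma, Set.mem_sigma_iff, mem_coe, mem_erase] at hp hp'
      simp only at heq
      have hxt' : x t ∈ t' ∧ y ∈ t' := by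
        have := hx t' hp'.1
        rcases Sym2.eq_iff.1 heq with ⟨h, h'⟩ | ⟨h, h'⟩
        · rw [h, h']; exact ⟨this, hp'.2.2⟩
        · rw [h, h']; exact ⟨hp'.2.2, this⟩
      obtain rfl := hxp t hp.1 y hp.2.2 hp.2.1 t' hp'.1 hxt'.1 hxt'.2
      rcases Sym2.eq_iff.1 heq with ⟨h, h'⟩ | ⟨h, h'⟩
      · rw [h']
      · exact (hp.2.1 h').elim
  obtain ⟨c, hadj, hc⟩ := mantel_equality H hn hfree hE
  have hcov : ∀ u v, c u ≠ c v → ∃ t ∈ 𝒯, u ∈ t ∧ v ∈ t ∧ (x t = u ∨ x t = v) :=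
    fun u v h => ((hadj u v).2 h).2
  have hpriv : ∀ u v, c u ≠ c v → ∀ t ∈ 𝒯, ∀ t' ∈ 𝒯, u ∈ t → v ∈ t → u ∈ t' → v ∈ t' →
      t = t' := by
    intro u v h t ht t' ht' hu hv hu' hv'
    obtain ⟨s, -, -, -, -, hs⟩ := hHpriv u v ((hadj u v).2 h)
    rw [hs t ht hu hv, hs t' ht' hu' hv']
  have hopp : ∀ t ∈ 𝒯, ∀ y ∈ t, y ≠ x t → c y ≠ c (x t) := fun t ht y hy hne =>
    (hadj _ _).1 ⟨hne, t, ht, hy, hx t ht, Or.inr rfl⟩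
  -- Apices in both classes would give spines `yz` and `y'z'` in opposite classes, and then
  -- the edge `yy'` would lie in the two members `yzy'` and `yy'z'`.
  have hsame : ∀ t ∈ 𝒯, ∀ t' ∈ 𝒯, c (x t) = c (x t') := by
    intro t ht t' ht'
    by_contra hne
    obtain ⟨y, z, hyz, he⟩ := card_eq_two.1
      (show #(t.erase (x t)) = 2 by rw [card_erase_of_mem (hx t ht), htri t ht])
    obtain ⟨y', z', hyz', he'⟩ := card_eq_two.1
      (show #(t'.erase (x t')) = 2 by rw [card_erase_of_mem (hx t' ht'), htri t' ht'])
    have hy : y ≠ x t ∧ y ∈ t := mem_erase.1 (by simp [he])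
    have hz : z ≠ x t ∧ z ∈ t := mem_erase.1 (by simp [he])
    have hy' : y' ≠ x t' ∧ y' ∈ t' := mem_erase.1 (by simp [he'])
    have hz' : z' ≠ x t' ∧ z' ∈ t' := mem_erase.1 (by simp [he'])
    have cy := hopp t ht y hy.2 hy.1
    have cz := hopp t ht z hz.2 hz.1
    have cy' := hopp t' ht' y' hy'.2 hy'.1
    have cz' := hopp t' ht' z' hz'.2 hz'.1
    have hbool : ∀ p q r r' : Bool, p ≠ r → q ≠ r' → r ≠ r' → p ≠ q := by decide
    have dyy := hbool _ _ _ _ cy cy' hne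
    have dyz := hbool _ _ _ _ cy cz' hne
    have dzy := hbool _ _ _ _ cz cy' hne
    have dzz := hbool _ _ _ _ cz cz' hne
    have nyy : y ≠ y' := fun h => dyy (congrArg c h)
    have nyz : y ≠ z' := fun h => dyz (congrArg c h)
    have nzy : z ≠ y' := fun h => dzy (congrArg c h)
    have nzz : z ≠ z' := fun h => dzz (congrArg c h)
    obtain ⟨s₁, i₁, a₁, b₁, -⟩ := hcov _ _ dyy
    obtain ⟨s₂, i₂, a₂, b₂, -⟩ := hcov _ _ dyz
    obtain ⟨s₃, i₃, a₃, b₃, -⟩ := hcov _ _ dzy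
    have m₁ : {y, z, y'} ∈ 𝒯 := triple_mem htri hnr hyz nyy nzy ht i₃ i₁
      hy.2 hz.2 a₃ b₃ a₁ b₁
    have m₂ : {y, y', z'} ∈ 𝒯 := triple_mem htri hnr nyy nyz hyz' i₁ ht' i₂
      a₁ b₁ hy'.2 hz'.2 a₂ b₂
    have e := hpriv y y' dyy _ m₁ _ m₂ (by simp) (by simp) (by simp) (by simp)
    have : z ∈ ({y, y', z'} : Finset V) := by rw [← e]; simp
    simp only [mem_insert, mem_singleton] at this
    rcases this with h | h | h
    · exact hyz h.symm
    · exact nzy h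
    · exact nzz h
  obtain ⟨t₀, ht₀⟩ : 𝒯.Nonempty := card_pos.1 (by rw [hcard']; positivity)
  exact structure_of_bipartite hk 𝒯 htri hnr x hx c hc hcov hpriv hopp (c (x t₀))
    fun t ht => hsame t ht t₀ ht₀
end

section
/- Let n be a positive integer divisible by 4. Then the family 𝒯*_n, consisting of n²/8 distinct triangles on n vertices, has no rainbow triangle with respect to 𝒯*_n. -/
/-- Three distinct edges of a triangle are the sets opposite to its three vertices `a`, `b`, `c`. -/
theorem exists_vertices_of_edges {V : Type*} [DecidableEq V] {s e₁ e₂ e₃ : Finset V}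
    (hs : s.card = 3) (h12 : e₁ ≠ e₂) (h13 : e₁ ≠ e₃) (h23 : e₂ ≠ e₃)
    (c1 : e₁.card = 2) (c2 : e₂.card = 2) (c3 : e₃.card = 2)
    (s1 : e₁ ⊆ s) (s2 : e₂ ⊆ s) (s3 : e₃ ⊆ s) :
    ∃ a b c : V, a ≠ b ∧ a ≠ c ∧ b ≠ c ∧
      b ∈ e₁ ∧ c ∈ e₁ ∧ a ∈ e₂ ∧ c ∈ e₂ ∧ a ∈ e₃ ∧ b ∈ e₃ := by
  have key : ∀ e : Finset V, e ⊆ s → e.card = 2 → ∃ a ∈ s, e = s.erase a := by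
    intro e he hc
    have h1 : (s \ e).card = 1 := by rw [Finset.card_sdiff_of_subset he, hs, hc]
    obtain ⟨a, ha⟩ := Finset.card_eq_one.1 h1
    have has : a ∈ s \ e := by simp [ha]
    refine ⟨a, (Finset.mem_sdiff.1 has).1, ?_⟩
    rw [Finset.erase_eq, ← ha, Finset.sdiff_sdiff_eq_self he]
  obtain ⟨a, ha, rfl⟩ := key e₁ s1 c1
  obtain ⟨b, hb, rfl⟩ := key e₂ s2 c2
  obtain ⟨c, hc, rfl⟩ := key e₃ s3 c3
  refine ⟨a, b, c, ?_⟩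
  grind

/-- The family `𝒯*_n` (for `4 ∣ n`), obtained from `n/4` pairwise disjoint pairs `P` by
joining each pair to each of the remaining `n/2` vertices, consists of `n²/8` distinct
triangles and has no rainbow triangle. -/
theorem extremal_family_no_rainbow_triangle
    {V : Type*} [Fintype V] [DecidableEq V] {n : ℕ}
    (hn : Fintype.card V = n) (hpos : 0 < n) (hdvd : 4 ∣ n)
    (P : Finset (Finset V))
    (hPcard : P.card = n / 4)
    (hpairs : ∀ p ∈ P, p.card = 2)
    (hdisj : ∀ p ∈ P, ∀ q ∈ P, p ≠ q → Disjoint p q)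
    (W : Finset V)
    (hW : W = Finset.univ \ P.biUnion id)
    (𝒯 : Finset (Finset V))
    (h𝒯 : 𝒯 = (P ×ˢ W).image fun pw => insert pw.2 pw.1) :
    8 * 𝒯.card = n ^ 2 ∧ ¬ HasRainbowTriangle 𝒯 := by
  have hWP : ∀ w ∈ W, ∀ p ∈ P, w ∉ p := by
    intro w hw p hp hwp
    rw [hW, Finset.mem_sdiff] at hw
    exact hw.2 (Finset.mem_biUnion.2 ⟨p, hp, hwp⟩)
  have huniq : ∀ p ∈ P, ∀ q ∈ P, ∀ x, x ∈ p → x ∈ q → p = q := by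
    intro p hp q hq x hxp hxq
    by_contra hne
    exact Finset.disjoint_left.1 (hdisj p hp q hq hne) hxp hxq
  constructor
  · have hinj : Set.InjOn (fun pw : Finset V × V => insert pw.2 pw.1)
        (P ×ˢ W : Finset (Finset V × V)) := by
      rintro ⟨p, w⟩ h1 ⟨q, v⟩ h2 heq
      simp only [Finset.coe_product, Set.mem_prod, Finset.mem_coe] at h1 h2 heq
      obtain ⟨hp, hw⟩ := h1
      obtain ⟨hq, hv⟩ := h2
      obtain ⟨x, hx⟩ : p.Nonempty := Finset.card_pos.1 (by rw [hpairs p hp]; norm_num)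
      have hxv : x ∈ insert v q := heq ▸ Finset.mem_insert_of_mem hx
      have hxq : x ∈ q := (Finset.mem_insert.1 hxv).resolve_left fun h =>
        hWP v hv p hp (h ▸ hx)
      have hpq : p = q := huniq p hp q hq x hx hxq
      have hwv : w ∈ insert v q := heq ▸ Finset.mem_insert_self w p
      have : w = v := (Finset.mem_insert.1 hwv).resolve_right (hWP w hw q hq)
      rw [hpq, this]
    have hU : (P.biUnion id).card = P.card * 2 := by
      rw [Finset.card_biUnion (t := id) fun p hp q hq hne => hdisj p hp q hq hne]
      exact Finset.sum_const_nat hpairs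
    have hWc : W.card = n - n / 4 * 2 := by
      rw [hW, Finset.card_sdiff_of_subset (Finset.subset_univ _), Finset.card_univ, hn, hU, hPcard]
    rw [h𝒯, Finset.card_image_of_injOn hinj, Finset.card_product, hWc, hPcard]
    obtain ⟨k, rfl⟩ := hdvd
    have e1 : 4 * k / 4 = k := by omega
    have e2 : 4 * k - k * 2 = 2 * k := by omega
    rw [e1, e2]
    ring
  · rintro ⟨s, e₁, e₂, e₃, t₁, t₂, t₃, hs, m1, m2, m3, n12, n13, n23, h12, h13, h23,
      c1, c2, c3, s1, s2, s3, i1, i2, i3⟩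
    obtain ⟨a, b, c, hab, hac, hbc, b1, c1', a2, c2', a3, b3⟩ :=
      exists_vertices_of_edges hs h12 h13 h23 c1 c2 c3 s1 s2 s3
    have hmem : ∀ t ∈ 𝒯, ∃ p ∈ P, ∃ w ∈ W, t = insert w p := by
      intro t ht
      rw [h𝒯, Finset.mem_image] at ht
      obtain ⟨⟨p, w⟩, hpw, rfl⟩ := ht
      rw [Finset.mem_product] at hpw
      exact ⟨p, hpw.1, w, hpw.2, rfl⟩
    have hthree : ∀ p ∈ P, a ∈ p → b ∈ p → c ∈ p → False := by
      intro p hp ha hb hc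
      have := Finset.two_lt_card.2 ⟨a, ha, b, hb, c, hc, hab, hac, hbc⟩
      rw [hpairs p hp] at this
      omega
    obtain ⟨p₁, hp₁, w₁, hw₁, rfl⟩ := hmem t₁ m1
    obtain ⟨p₂, hp₂, w₂, hw₂, rfl⟩ := hmem t₂ m2
    obtain ⟨p₃, hp₃, w₃, hw₃, rfl⟩ := hmem t₃ m3
    replace b1 := Finset.mem_insert.1 (i1 b1)
    replace c1' := Finset.mem_insert.1 (i1 c1')
    replace a2 := Finset.mem_insert.1 (i2 a2)
    replace c2' := Finset.mem_insert.1 (i2 c2')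
    replace a3 := Finset.mem_insert.1 (i3 a3)
    replace b3 := Finset.mem_insert.1 (i3 b3)
    clear i1 i2 i3 s1 s2 s3 c1 c2 c3 h12 h13 h23 hs m1 m2 m3 hmem h𝒯 hW hdisj hpairs hPcard
    -- Each of the six incidences puts a vertex either at the apex `wᵢ` or in the pair `pᵢ`.
    rcases b1 with b1 | b1 <;> rcases c1' with c1' | c1' <;> rcases a2 with a2 | a2 <;>
      rcases c2' with c2' | c2' <;> rcases a3 with a3 | a3 <;> rcases b3 with b3 | b3 <;>
      grind
end

section
/- For every ε > 0 there exists N such that for all n ≥ N the following holds: if 𝒯 is a multiset of (not necessarily distinct) triangles on a set V of n vertices having no rainbow triangle with respect to 𝒯, then the total size of 𝒯 counted with multiplicity is at most (1/8 + ε)·n². -/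
/-!
The union graph `G` of a rainbow-triangle-free multiset `𝒯` consists of all pairs covered by a
member of `𝒯`. Hall's condition fails for every triangle of `G`, and two edges of a triangle `s`
lying in a common 3-set force that 3-set to be `s`; hence every triangle of `G` is a member of `𝒯`
(`mem_of_isNClique`). Call an edge of a member *private* if it lies in no other 3-set from `𝒯`.
Every member has at least two private edges (`two_le_card_privateEdges`), a repeated member has
three (`three_le_card_privateEdges`), and no multiplicity exceeds two (`count_le_two`).

Private edges of distinct members are distinct, so `𝒯` has at most `n²` distinct members and `G`
has `O(n²) = o(n³)` triangles. By the triangle removal lemma, deleting a set `F` of at most `ε n²`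
edges makes `G` triangle-free, and by Mantel's theorem at most `n² / 4` edges remain. A repeated
member has only three edges to pay for its multiplicity two, but all three are private and one of
them is in `F`. So twice the multiplicity of `s` is at most the number of private edges of `s` plus
the number of those in `F`, and summing over `s` gives `2 |𝒯| ≤ e(G) + |F| ≤ n² / 4 + 2 |F|`.
-/

/-- A multiset `𝒯` of triangles (3-element vertex subsets) has a rainbow triangle if there
is a triangle `s` together with three members `t₁, t₂, t₃` of `𝒯` that are pairwise
distinct *as multiset members* (expressed by `{t₁, t₂, t₃} ≤ 𝒯` as multisets, so a
triangle of multiplicity `k` may be used up to `k` times), such that the three edges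
(2-element subsets) of `s` can be enumerated `e₁, e₂, e₃` with `eᵢ ⊆ tᵢ`. -/
def MulHasRainbowTriangle {V : Type*} (𝒯 : Multiset (Finset V)) : Prop :=
  ∃ s e₁ e₂ e₃ t₁ t₂ t₃ : Finset V,
    s.card = 3 ∧
    ({t₁, t₂, t₃} : Multiset (Finset V)) ≤ 𝒯 ∧
    e₁ ≠ e₂ ∧ e₁ ≠ e₃ ∧ e₂ ≠ e₃ ∧
    e₁.card = 2 ∧ e₂.card = 2 ∧ e₃.card = 2 ∧
    e₁ ⊆ s ∧ e₂ ⊆ s ∧ e₃ ⊆ s ∧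
    e₁ ⊆ t₁ ∧ e₂ ⊆ t₂ ∧ e₃ ⊆ t₃

namespace RainbowTriangle

open Finset

variable {V : Type} {𝒯 : Multiset (Finset V)}

/-! ### Preliminaries -/

/-- Members that differ as sets may be used together, whatever their multiplicities. -/
lemma triple_le {t₁ t₂ t₃ : Finset V} (h₁ : t₁ ∈ 𝒯) (h₂ : t₂ ∈ 𝒯) (h₃ : t₃ ∈ 𝒯)
    (h₁₂ : t₁ ≠ t₂) (h₁₃ : t₁ ≠ t₃) (h₂₃ : t₂ ≠ t₃) :
    ({t₁, t₂, t₃} : Multiset (Finset V)) ≤ 𝒯 := by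
  rw [Multiset.le_iff_subset (by simp [h₁₂, h₁₃, h₂₃])]
  intro t ht
  simp only [Multiset.insert_eq_cons, Multiset.mem_cons, Multiset.mem_singleton] at ht
  grind

/-- Mantel's theorem. -/
lemma four_mul_card_edgeFinset_le [Fintype V] {G : SimpleGraph V} [DecidableRel G.Adj]
    (hG : G.CliqueFree 3) : 4 * G.edgeFinset.card ≤ Fintype.card V ^ 2 := by
  have h := SimpleGraph.CliqueFree.card_edgeFinset_le (r := 2) hG
  dsimp only at h
  -- Turán's bound carries the term `(n % 2).choose 2`, which vanishes.
  have h' := Nat.choose_eq_zero_of_lt (Nat.mod_lt (Fintype.card V) two_pos)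
  simp only [h', Nat.add_zero] at h
  omega

variable [DecidableEq V]

/-- The rainbow condition for a triangle given by its three vertices. -/
lemma rainbow_of_vertices {x y z : V} {t₁ t₂ t₃ : Finset V}
    (hxy : x ≠ y) (hxz : x ≠ z) (hyz : y ≠ z)
    (hle : ({t₁, t₂, t₃} : Multiset (Finset V)) ≤ 𝒯)
    (h₁ : x ∈ t₁ ∧ y ∈ t₁) (h₂ : x ∈ t₂ ∧ z ∈ t₂) (h₃ : y ∈ t₃ ∧ z ∈ t₃) :
    MulHasRainbowTriangle 𝒯 := by
  refine ⟨{x, y, z}, {x, y}, {x, z}, {y, z}, t₁, t₂, t₃, card_eq_three.2 ⟨x, y, z, hxy, hxz, hyz,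
    rfl⟩, hle, ?_, ?_, ?_, card_pair hxy, card_pair hxz, card_pair hyz, ?_, ?_, ?_, ?_, ?_, ?_⟩
  · intro h
    have : y ∈ ({x, z} : Finset V) := h ▸ (by simp)
    simp_all
  · intro h
    have : x ∈ ({y, z} : Finset V) := h ▸ (by simp)
    simp_all
  · intro h
    have : x ∈ ({y, z} : Finset V) := h ▸ (by simp)
    simp_all
  all_goals (intro v; simp only [mem_insert, mem_singleton]; grind)

lemma eq_triple {x y z : V} {t : Finset V} (ht : t.card = 3)
    (hxy : x ≠ y) (hxz : x ≠ z) (hyz : y ≠ z) (hx : x ∈ t) (hy : y ∈ t) (hz : z ∈ t) :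
    t = {x, y, z} := by
  symm
  apply eq_of_subset_of_card_le
  · intro v
    simp only [mem_insert, mem_singleton]
    grind
  · rw [ht, card_eq_three.2 ⟨x, y, z, hxy, hxz, hyz, rfl⟩]

/-! ### The union graph and private edges -/

/-- The graph of all pairs of vertices covered by a member of `𝒯`. -/
def unionGraph (𝒯 : Multiset (Finset V)) : SimpleGraph V where
  Adj x y := x ≠ y ∧ ∃ t ∈ 𝒯, x ∈ t ∧ y ∈ t
  symm := ⟨fun _ _ h => ⟨h.1.symm, by obtain ⟨t, ht, hx, hy⟩ := h.2; exact ⟨t, ht, hy, hx⟩⟩⟩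
  loopless := ⟨fun _ h => h.1 rfl⟩

open Classical in
/-- The private edges of `s`: the two-element subsets of `s`, as unordered pairs, that are contained
in no other 3-set occurring in `𝒯`. -/
noncomputable def privateEdges (𝒯 : Multiset (Finset V)) (s : Finset V) : Finset (Sym2 V) :=
  s.sym2.filter fun e => ¬ e.IsDiag ∧ ∀ t ∈ 𝒯, e ∈ t.sym2 → t = s

lemma mem_privateEdges {s : Finset V} {x y : V} :
    s(x, y) ∈ privateEdges 𝒯 s ↔
      (x ∈ s ∧ y ∈ s) ∧ x ≠ y ∧ ∀ t ∈ 𝒯, x ∈ t → y ∈ t → t = s := by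
  simp [privateEdges, -mem_sym2_iff, mk_mem_sym2_iff]

/-- If two of the three covering members coincide, that member is the triangle itself;
otherwise the triangle is rainbow. -/
lemma mem_of_isNClique (h3 : ∀ t ∈ 𝒯, t.card = 3) (hT : ¬ MulHasRainbowTriangle 𝒯)
    {s : Finset V} (hs : (unionGraph 𝒯).IsNClique 3 s) : s ∈ 𝒯 := by
  obtain ⟨x, y, z, ⟨hxy, t₁, m₁, a₁⟩, ⟨hxz, t₂, m₂, a₂⟩, ⟨hyz, t₃, m₃, a₃⟩, rfl⟩ :=
    SimpleGraph.is3Clique_iff.1 hs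
  by_cases h₁₂ : t₁ = t₂
  · subst h₁₂
    rwa [← eq_triple (h3 _ m₁) hxy hxz hyz a₁.1 a₁.2 a₂.2]
  by_cases h₁₃ : t₁ = t₃
  · subst h₁₃
    rwa [← eq_triple (h3 _ m₁) hxy hxz hyz a₁.1 a₁.2 a₃.2]
  by_cases h₂₃ : t₂ = t₃
  · subst h₂₃
    rwa [← eq_triple (h3 _ m₂) hxy hxz hyz a₂.1 a₃.1 a₂.2]
  exact (hT (rainbow_of_vertices hxy hxz hyz (triple_le m₁ m₂ m₃ h₁₂ h₁₃ h₂₃) a₁ a₂ a₃)).elim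

/-- Of two edges of a member, at least one is private: otherwise the other members through these
two edges, together with the member itself on the third edge, form a rainbow triangle. -/
lemma private_or_private (h3 : ∀ t ∈ 𝒯, t.card = 3) (hT : ¬ MulHasRainbowTriangle 𝒯)
    {x y z : V} (hxy : x ≠ y) (hxz : x ≠ z) (hyz : y ≠ z) {s : Finset V} (hs : s ∈ 𝒯)
    (hx : x ∈ s) (hy : y ∈ s) (hz : z ∈ s) :
    s(x, y) ∈ privateEdges 𝒯 s ∨ s(x, z) ∈ privateEdges 𝒯 s := by
  by_contra! h
  simp only [mem_privateEdges, not_and, not_forall] at h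
  obtain ⟨t₁, m₁, x₁, y₁, n₁⟩ := h.1 ⟨hx, hy⟩ hxy
  obtain ⟨t₂, m₂, x₂, z₂, n₂⟩ := h.2 ⟨hx, hz⟩ hxz
  have h₁₂ : t₁ ≠ t₂ := by
    rintro rfl
    exact n₁ ((eq_triple (h3 _ m₁) hxy hxz hyz x₁ y₁ z₂).trans
      (eq_triple (h3 _ hs) hxy hxz hyz hx hy hz).symm)
  exact hT (rainbow_of_vertices hxy hxz hyz (triple_le m₁ m₂ hs h₁₂ n₁ n₂) ⟨x₁, y₁⟩ ⟨x₂, z₂⟩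
    ⟨hy, hz⟩)

lemma two_le_card_privateEdges (h3 : ∀ t ∈ 𝒯, t.card = 3) (hT : ¬ MulHasRainbowTriangle 𝒯)
    {s : Finset V} (hs : s ∈ 𝒯) : 2 ≤ (privateEdges 𝒯 s).card := by
  obtain ⟨x, y, z, hxy, hxz, hyz, rfl⟩ := card_eq_three.1 (h3 s hs)
  have h₁ := private_or_private h3 hT hxy hxz hyz hs (by simp) (by simp) (by simp)
  have h₂ := private_or_private h3 hT hxy.symm hyz hxz hs (by simp) (by simp) (by simp)
  have h₃ := private_or_private h3 hT hxz.symm hyz.symm hxy hs (by simp) (by simp) (by simp)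
  rw [Sym2.eq_swap (a := y) (b := x)] at h₂
  rw [Sym2.eq_swap (a := z) (b := x), Sym2.eq_swap (a := z) (b := y)] at h₃
  have n₁ : s(x, y) ≠ s(x, z) := by simp; grind
  have n₂ : s(x, y) ≠ s(y, z) := by simp; grind
  have n₃ : s(x, z) ≠ s(y, z) := by simp; grind
  apply Nat.succ_le_of_lt
  rw [one_lt_card_iff]
  grind

/-- The two copies of a repeated member cover two of its edges, so no other member may cover
the third. -/
lemma mem_privateEdges_of_two_le_count (hT : ¬ MulHasRainbowTriangle 𝒯)
    {x y z : V} (hxy : x ≠ y) (hxz : x ≠ z) (hyz : y ≠ z) {s : Finset V}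
    (hs : 2 ≤ 𝒯.count s) (hx : x ∈ s) (hy : y ∈ s) (hz : z ∈ s) :
    s(x, y) ∈ privateEdges 𝒯 s := by
  rw [mem_privateEdges]
  refine ⟨⟨hx, hy⟩, hxy, fun t ht xt yt => ?_⟩
  by_contra hne
  have hle : ({t, s, s} : Multiset (Finset V)) ≤ 𝒯 := by
    rw [Multiset.le_iff_count]
    intro a
    have := Multiset.one_le_count_iff_mem.2 ht
    simp only [Multiset.insert_eq_cons, Multiset.count_cons, Multiset.count_singleton]
    grind
  exact hT (rainbow_of_vertices hxy hxz hyz hle ⟨xt, yt⟩ ⟨hx, hz⟩ ⟨hy, hz⟩)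

lemma three_le_card_privateEdges (h3 : ∀ t ∈ 𝒯, t.card = 3) (hT : ¬ MulHasRainbowTriangle 𝒯)
    {s : Finset V} (hs : 2 ≤ 𝒯.count s) : 3 ≤ (privateEdges 𝒯 s).card := by
  have hm : s ∈ 𝒯 := Multiset.one_le_count_iff_mem.1 (by omega)
  obtain ⟨x, y, z, hxy, hxz, hyz, rfl⟩ := card_eq_three.1 (h3 s hm)
  have h₁ := mem_privateEdges_of_two_le_count hT hxy hxz hyz hs (by simp) (by simp) (by simp)
  have h₂ := mem_privateEdges_of_two_le_count hT hxz hxy hyz.symm hs (by simp) (by simp) (by simp)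
  have h₃ := mem_privateEdges_of_two_le_count hT hyz hxy.symm hxz.symm hs (by simp) (by simp)
    (by simp)
  have n₁ : s(x, y) ≠ s(x, z) := by simp; grind
  have n₂ : s(x, y) ≠ s(y, z) := by simp; grind
  have n₃ : s(x, z) ≠ s(y, z) := by simp; grind
  apply Nat.succ_le_of_lt
  rw [two_lt_card_iff]
  exact ⟨_, _, _, h₁, h₂, h₃, n₁, n₂, n₃⟩

lemma count_le_two (h3 : ∀ t ∈ 𝒯, t.card = 3) (hT : ¬ MulHasRainbowTriangle 𝒯)
    (s : Finset V) : 𝒯.count s ≤ 2 := by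
  by_contra! h
  have hm : s ∈ 𝒯 := Multiset.one_le_count_iff_mem.1 (by omega)
  obtain ⟨x, y, z, hxy, hxz, hyz, rfl⟩ := card_eq_three.1 (h3 s hm)
  refine hT (rainbow_of_vertices hxy hxz hyz (Multiset.le_count_iff_replicate_le.1 h)
    (by simp) (by simp) (by simp))

/-! ### Charging members to edges -/

/-- The charging inequality: `F` meets the edge set of every member, which compensates for a
repeated member having only three edges. -/
lemma two_mul_count_le (h3 : ∀ t ∈ 𝒯, t.card = 3) (hT : ¬ MulHasRainbowTriangle 𝒯)
    {F : Finset (Sym2 V)}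
    (hF : ∀ x y z, x ≠ y → x ≠ z → y ≠ z → ({x, y, z} : Finset V) ∈ 𝒯 →
      s(x, y) ∈ F ∨ s(x, z) ∈ F ∨ s(y, z) ∈ F)
    {s : Finset V} (hs : s ∈ 𝒯) :
    2 * 𝒯.count s ≤ (privateEdges 𝒯 s).card + (privateEdges 𝒯 s ∩ F).card := by
  have h2 := count_le_two h3 hT s
  rcases h2.lt_or_eq with h | h
  · have := two_le_card_privateEdges h3 hT hs
    omega
  · have hp := three_le_card_privateEdges h3 hT h.ge
    suffices 0 < (privateEdges 𝒯 s ∩ F).card by omega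
    rw [card_pos]
    obtain ⟨x, y, z, hxy, hxz, hyz, rfl⟩ := card_eq_three.1 (h3 s hs)
    have h₁ := mem_privateEdges_of_two_le_count hT hxy hxz hyz h.ge (by simp) (by simp) (by simp)
    have h₂ := mem_privateEdges_of_two_le_count hT hxz hxy hyz.symm h.ge (by simp) (by simp)
      (by simp)
    have h₃ := mem_privateEdges_of_two_le_count hT hyz hxy.symm hxz.symm h.ge (by simp) (by simp)
      (by simp)
    rcases hF x y z hxy hxz hyz hs with h | h | h
    · exact ⟨_, mem_inter.2 ⟨h₁, h⟩⟩
    · exact ⟨_, mem_inter.2 ⟨h₂, h⟩⟩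
    · exact ⟨_, mem_inter.2 ⟨h₃, h⟩⟩

lemma pairwiseDisjoint_privateEdges (S : Set (Finset V)) (hS : ∀ s ∈ S, s ∈ 𝒯) :
    S.PairwiseDisjoint (privateEdges 𝒯) := by
  intro s hs t _ hst
  rw [Function.onFun, disjoint_left]
  intro e he he'
  simp only [privateEdges, mem_filter] at he he'
  exact hst (he'.2.2 s (hS s hs) he.1)

lemma privateEdges_subset {s : Finset V} (hs : s ∈ 𝒯)
    [Fintype (unionGraph 𝒯).edgeSet] : privateEdges 𝒯 s ⊆ (unionGraph 𝒯).edgeFinset := by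
  intro e
  induction e using Sym2.ind with
  | _ x y =>
    rw [mem_privateEdges, SimpleGraph.mem_edgeFinset, SimpleGraph.mem_edgeSet]
    exact fun h => ⟨h.2.1, s, hs, h.1⟩

end RainbowTriangle

open RainbowTriangle

/-- Asymptotic bound for multiset families: for every `ε > 0` and all sufficiently large
`n`, a rainbow-triangle-free multiset of triangles on `n` vertices has total size
(counted with multiplicity) at most `(1/8 + ε) · n²`. -/
theorem multiset_card_le_of_no_rainbow_triangle :
    ∀ ε : ℝ, 0 < ε → ∃ N : ℕ, ∀ n : ℕ, N ≤ n →
      ∀ (V : Type) [Fintype V] [DecidableEq V], Fintype.card V = n →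
        ∀ 𝒯 : Multiset (Finset V),
          (∀ t ∈ 𝒯, t.card = 3) →
          ¬ MulHasRainbowTriangle 𝒯 →
          (Multiset.card 𝒯 : ℝ) ≤ (1 / 8 + ε) * (n : ℝ) ^ 2 := by
  intro ε hε
  have hb := SimpleGraph.triangleRemovalBound_pos hε
  -- For `n` beyond this `N`, the `n²` bound on triangles of `G` is below the removal threshold
  -- `triangleRemovalBound ε * n ^ 3`.
  obtain ⟨N, hN⟩ := exists_nat_gt (SimpleGraph.triangleRemovalBound ε)⁻¹
  refine ⟨N, fun n hn V _ _ hV 𝒯 h3 hT => ?_⟩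
  classical
  have hnN : (SimpleGraph.triangleRemovalBound ε)⁻¹ < n := hN.trans_le (by exact_mod_cast hn)
  have hn0 : (0 : ℝ) < n := (inv_pos.2 hb).trans hnN
  set G := unionGraph 𝒯
  have hdisj := pairwiseDisjoint_privateEdges (𝒯 := 𝒯) (𝒯.toFinset : Set (Finset V))
    (fun s hs => by simpa using hs)
  have hunion : 𝒯.toFinset.biUnion (privateEdges 𝒯) ⊆ G.edgeFinset :=
    Finset.biUnion_subset.2 fun s hs => privateEdges_subset (Multiset.mem_toFinset.1 hs)
  have hsum : ∑ s ∈ 𝒯.toFinset, (privateEdges 𝒯 s).card ≤ G.edgeFinset.card := by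
    rw [← Finset.card_biUnion hdisj]
    exact Finset.card_le_card hunion
  have hS : 𝒯.toFinset.card ≤ n ^ 2 := by
    calc 𝒯.toFinset.card = ∑ s ∈ 𝒯.toFinset, 1 := by simp
      _ ≤ ∑ s ∈ 𝒯.toFinset, (privateEdges 𝒯 s).card := Finset.sum_le_sum fun s hs =>
          one_le_two.trans (two_le_card_privateEdges h3 hT (Multiset.mem_toFinset.1 hs))
      _ ≤ G.edgeFinset.card := hsum
      _ ≤ n.choose 2 := hV ▸ G.card_edgeFinset_le_card_choose_two
      _ ≤ n ^ 2 := Nat.choose_le_pow n 2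
  have hcl : ((G.cliqueFinset 3).card : ℝ) <
      SimpleGraph.triangleRemovalBound ε * (Fintype.card V : ℝ) ^ 3 := by
    have hsub : G.cliqueFinset 3 ⊆ 𝒯.toFinset := fun s hs =>
      Multiset.mem_toFinset.2 (mem_of_isNClique h3 hT (SimpleGraph.mem_cliqueFinset_iff.1 hs))
    have hle : ((G.cliqueFinset 3).card : ℝ) ≤ (n : ℝ) ^ 2 := by
      exact_mod_cast (Finset.card_le_card hsub).trans hS
    have h1 : 1 < SimpleGraph.triangleRemovalBound ε * n := by
      rwa [inv_lt_iff_one_lt_mul₀' hb] at hnN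
    rw [hV]
    nlinarith [pow_pos hn0 2]
  obtain ⟨G', hG'G, _, hF, hfree⟩ := SimpleGraph.triangle_removal hcl
  set F := G.edgeFinset \ G'.edgeFinset with hFdef
  have hsubset : G'.edgeFinset ⊆ G.edgeFinset := SimpleGraph.edgeFinset_mono hG'G
  have hcard : F.card + G'.edgeFinset.card = G.edgeFinset.card :=
    Finset.card_sdiff_add_card_eq_card hsubset
  have hmeet : ∀ x y z, x ≠ y → x ≠ z → y ≠ z → ({x, y, z} : Finset V) ∈ 𝒯 →
      s(x, y) ∈ F ∨ s(x, z) ∈ F ∨ s(y, z) ∈ F := by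
    intro x y z hxy hxz hyz hs
    by_contra! h
    have a₁ : G.Adj x y := ⟨hxy, _, hs, by simp, by simp⟩
    have a₂ : G.Adj x z := ⟨hxz, _, hs, by simp, by simp⟩
    have a₃ : G.Adj y z := ⟨hyz, _, hs, by simp, by simp⟩
    simp only [hFdef, Finset.mem_sdiff, SimpleGraph.mem_edgeFinset, SimpleGraph.mem_edgeSet, a₁, a₂,
      a₃, true_and, not_not] at h
    exact hfree {x, y, z} (SimpleGraph.is3Clique_triple_iff.2 h)
  have hsumF : ∑ s ∈ 𝒯.toFinset, (privateEdges 𝒯 s ∩ F).card ≤ F.card := by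
    rw [← Finset.card_biUnion fun s hs t ht hst =>
      (hdisj hs ht hst).mono Finset.inter_subset_left Finset.inter_subset_left]
    exact Finset.card_le_card (Finset.biUnion_subset.2 fun s _ => Finset.inter_subset_right)
  have hmain : 2 * Multiset.card 𝒯 ≤ G.edgeFinset.card + F.card := by
    rw [← Multiset.toFinset_sum_count_eq, Finset.mul_sum]
    refine (Finset.sum_le_sum fun s hs =>
      two_mul_count_le h3 hT hmeet (Multiset.mem_toFinset.1 hs)).trans ?_
    rw [Finset.sum_add_distrib]
    exact add_le_add hsum hsumF
  have hmantel := four_mul_card_edgeFinset_le hfree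
  rw [hV] at hmantel hF
  have e₁ : (F.card : ℝ) + G'.edgeFinset.card = G.edgeFinset.card := by exact_mod_cast hcard
  have e₂ : (2 : ℝ) * Multiset.card 𝒯 ≤ G.edgeFinset.card + F.card := by exact_mod_cast hmain
  have e₃ : (4 : ℝ) * G'.edgeFinset.card ≤ (n : ℝ) ^ 2 := by exact_mod_cast hmantel
  push_cast at hF
  linarith
end

section
/- Let 𝒯 be a multiset of triangles on a vertex set V having no rainbow triangle with respect to 𝒯, and let 𝒯₂ be the set of triangles that appear in 𝒯 with multiplicity at least 2. Then the triangles in 𝒯₂ are pairwise edge-disjoint: any two distinct triangles in 𝒯₂ share at most one vertex (equivalently, no 2-element subset is contained in two distinct members of 𝒯₂). -/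
/-- In a rainbow-triangle-free multiset of triangles, the triangles appearing with
multiplicity at least 2 are pairwise edge-disjoint: any two distinct such triangles
share at most one vertex. -/
theorem doubled_triangles_edge_disjoint_of_no_rainbow_triangle
    {V : Type*} [DecidableEq V]
    (𝒯 : Multiset (Finset V))
    (htri : ∀ t ∈ 𝒯, t.card = 3)
    (hnr : ¬ MulHasRainbowTriangle 𝒯) :
    ∀ t t' : Finset V, 2 ≤ 𝒯.count t → 2 ≤ 𝒯.count t' → t ≠ t' →
      (t ∩ t').card ≤ 1 := by
  intro t t' ht ht' hne
  by_contra! hcard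
  have htm : t ∈ 𝒯 := Multiset.count_pos.mp (by omega)
  obtain ⟨e, hesub, he⟩ := Finset.exists_subset_card_eq (show 2 ≤ (t ∩ t').card by omega)
  have het : e ⊆ t := hesub.trans Finset.inter_subset_left
  have het' : e ⊆ t' := hesub.trans Finset.inter_subset_right
  obtain ⟨a, b, hab, rfl⟩ := Finset.card_eq_two.mp he
  have ha : a ∈ t := het (by simp)
  have hb : b ∈ t := het (by simp)
  obtain ⟨c, hct, hc⟩ := Finset.exists_mem_notMem_of_card_lt_card
    (show ({a, b} : Finset V).card < t.card by rw [he, htri t htm]; omega)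
  have hca : c ≠ a := by rintro rfl; simp at hc
  have hcb : c ≠ b := by rintro rfl; simp at hc
  refine hnr ⟨t, {a, c}, {b, c}, {a, b}, t, t, t', htri t htm, ?_, ?_, ?_, ?_,
    Finset.card_pair hca.symm, Finset.card_pair hcb.symm, he, ?_, ?_, het, ?_, ?_, het'⟩
  · rw [Multiset.le_iff_count]
    intro x
    by_cases hxt : x = t
    · subst hxt
      simpa [Multiset.count_cons, Multiset.count_singleton, hne] using ht
    · by_cases hxt' : x = t'
      · subst hxt'
        rw [Multiset.insert_eq_cons, Multiset.insert_eq_cons, Multiset.count_cons_of_ne hxt,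
          Multiset.count_cons_of_ne hxt, Multiset.count_singleton_self]
        omega
      · simp [hxt, hxt']
  · intro h
    have : a ∈ ({b, c} : Finset V) := h ▸ by simp
    simp [hab, hca.symm] at this
  · intro h
    exact hc (h ▸ by simp)
  · intro h
    exact hc (h ▸ by simp)
  all_goals
    simp [Finset.insert_subset_iff, ha, hb, hct]
end

section
/- Let 𝒯 be a multiset of triangles on a vertex set V having no rainbow triangle with respect to 𝒯, let 𝒯₂ be the set of triangles appearing in 𝒯 with multiplicity at least 2, and let G₂ be the simple graph on V whose edge set is the union of the edge sets of the triangles in 𝒯₂. Then every edge of G₂ belongs to exactly one triangle of G₂; in particular, the only triangles of G₂ are the members of 𝒯₂. -/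
/-- `e` is an edge of the graph `G₂` whose edge set is the union of the edge sets of the
triangles appearing in `𝒯` with multiplicity at least 2. -/
def IsEdgeOfG2 {V : Type*} [DecidableEq V] (𝒯 : Multiset (Finset V)) (e : Finset V) : Prop :=
  e.card = 2 ∧ ∃ t : Finset V, 2 ≤ 𝒯.count t ∧ e ⊆ t

/-- `s` is a triangle of the graph `G₂`: a 3-element vertex set all of whose three edges
are edges of `G₂`. -/
def IsTriangleOfG2 {V : Type*} [DecidableEq V] (𝒯 : Multiset (Finset V)) (s : Finset V) : Prop :=
  s.card = 3 ∧ ∀ e ⊆ s, e.card = 2 → IsEdgeOfG2 𝒯 e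

lemma triple_le_of_two_le_count {α : Type*} [DecidableEq α] {m : Multiset α} {x y z : α}
    (hx : 2 ≤ m.count x) (hy : 2 ≤ m.count y) (hz : 2 ≤ m.count z)
    (hne : ¬ (x = y ∧ y = z)) : ({x, y, z} : Multiset α) ≤ m := by
  rw [Multiset.le_iff_count]
  intro a
  simp only [Multiset.insert_eq_cons, Multiset.count_cons, Multiset.count_singleton]
  grind

/-- If `f` covers each edge of the triangle `s` by a triangle of multiplicity at least two, then it
covers each edge by `s` itself. -/
lemma covering_eq_of_no_rainbow {V : Type*} [DecidableEq V] {𝒯 : Multiset (Finset V)}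
    (htri : ∀ t ∈ 𝒯, t.card = 3) (hnr : ¬ MulHasRainbowTriangle 𝒯)
    {s : Finset V} (hs : s.card = 3) (f : Finset V → Finset V)
    (hf : ∀ e ⊆ s, e.card = 2 → 2 ≤ 𝒯.count (f e) ∧ e ⊆ f e)
    {e : Finset V} (hes : e ⊆ s) (he : e.card = 2) : f e = s := by
  obtain ⟨x, y, hxy, rfl⟩ := Finset.card_eq_two.mp he
  obtain ⟨z, hz⟩ : ∃ z, s \ {x, y} = {z} := by
    rw [← Finset.card_eq_one, Finset.card_sdiff_of_subset hes]
    omega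
  have hzs : z ∈ s \ {x, y} := by simp [hz]
  have hx : x ∈ s := hes (by simp)
  have hy : y ∈ s := hes (by simp)
  have hzx : x ≠ z := by grind
  have hzy : y ≠ z := by grind
  have hxzs : ({x, z} : Finset V) ⊆ s := by grind
  have hyzs : ({y, z} : Finset V) ⊆ s := by grind
  obtain ⟨c₁, h₁⟩ := hf _ hes he
  obtain ⟨c₂, h₂⟩ := hf _ hxzs (Finset.card_pair hzx)
  obtain ⟨c₃, h₃⟩ := hf _ hyzs (Finset.card_pair hzy)
  have heq : f {x, y} = f {x, z} ∧ f {x, z} = f {y, z} := by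
    by_contra hne
    refine hnr ⟨s, {x, y}, {x, z}, {y, z}, _, _, _, hs, triple_le_of_two_le_count c₁ c₂ c₃ hne,
      ?_, ?_, ?_, he, Finset.card_pair hzx, Finset.card_pair hzy, hes, hxzs, hyzs, h₁, h₂, h₃⟩
    · exact fun h => by have : z ∈ ({x, y} : Finset V) := by simp [h]
                        grind
    · exact fun h => by have : z ∈ ({x, y} : Finset V) := by simp [h]
                        grind
    · exact fun h => by have : x ∈ ({y, z} : Finset V) := by simp [← h]
                        grind
  have hsub : s ⊆ f {x, y} := by
    intro w hw
    by_cases hw' : w ∈ ({x, y} : Finset V)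
    · exact h₁ hw'
    · have : w ∈ s \ {x, y} := Finset.mem_sdiff.mpr ⟨hw, hw'⟩
      rw [hz, Finset.mem_singleton] at this
      rw [heq.1, this]
      exact h₂ (by simp)
  have hcard := htri _ (Multiset.count_pos.mp (lt_of_lt_of_le Nat.zero_lt_two c₁))
  exact (Finset.eq_of_subset_of_card_le hsub (by omega)).symm

/-- In the graph `G₂` formed by the triangles of multiplicity at least 2 of a
rainbow-triangle-free multiset `𝒯` of triangles, every edge lies in exactly one triangle
of `G₂`; moreover the triangles of `G₂` are exactly the triangles of multiplicity
at least 2 in `𝒯`. -/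
theorem G2_edge_in_unique_triangle_of_no_rainbow_triangle
    {V : Type*} [DecidableEq V]
    (𝒯 : Multiset (Finset V))
    (htri : ∀ t ∈ 𝒯, t.card = 3)
    (hnr : ¬ MulHasRainbowTriangle 𝒯) :
    (∀ e : Finset V, IsEdgeOfG2 𝒯 e →
        ∃! s : Finset V, IsTriangleOfG2 𝒯 s ∧ e ⊆ s) ∧
    (∀ s : Finset V, IsTriangleOfG2 𝒯 s ↔ 2 ≤ 𝒯.count s) := by
  have key : ∀ s : Finset V, IsTriangleOfG2 𝒯 s ↔ 2 ≤ 𝒯.count s := by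
    intro s
    constructor
    · rintro ⟨hs, hedge⟩
      have hex : ∀ e : Finset V, ∃ t : Finset V,
          e ⊆ s → e.card = 2 → 2 ≤ 𝒯.count t ∧ e ⊆ t := by
        intro e
        by_cases h : e ⊆ s ∧ e.card = 2
        · obtain ⟨-, t, ht⟩ := hedge e h.1 h.2
          exact ⟨t, fun _ _ => ht⟩
        · exact ⟨∅, fun h₁ h₂ => absurd ⟨h₁, h₂⟩ h⟩
      choose f hf using hex
      obtain ⟨e, hes, he⟩ := Finset.exists_subset_card_eq (show 2 ≤ s.card by omega)
      have hfe := covering_eq_of_no_rainbow htri hnr hs f hf hes he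
      exact hfe ▸ (hf e hes he).1
    · intro h
      exact ⟨htri s (Multiset.count_pos.mp (lt_of_lt_of_le Nat.zero_lt_two h)),
        fun e hes he => ⟨he, s, h, hes⟩⟩
  refine ⟨?_, key⟩
  rintro e ⟨he, t, ht, het⟩
  refine ⟨t, ⟨(key t).mpr ht, het⟩, ?_⟩
  rintro s ⟨hs, hes⟩
  have hcs := (key s).mp hs
  -- Cover `e` by `t` and the other edges of `s` by `s`.
  have h := covering_eq_of_no_rainbow htri hnr hs.1 (fun d => if d = e then t else s)
    (by
      intro d hds _
      by_cases hd : d = e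
      · subst hd
        simpa using ⟨ht, het⟩
      · simpa [hd] using ⟨hcs, hds⟩) hes he
  simpa using h.symm
end

section
/- For every ε > 0 there exists N such that for all n ≥ N the following holds: if 𝒯 is a multiset of triangles on a set V of n vertices having no rainbow triangle with respect to 𝒯, then the number of distinct triangles that appear in 𝒯 with multiplicity at least 2 is at most ε·n². -/
open SimpleGraph in
/-- The (6,3)-type bound: a graph with edge-disjoint triangles on sufficiently many vertices has at
most `ε * n ^ 2` triangles. -/
lemma card_cliqueFinset_le_of_edgeDisjoint {ε : ℝ} (hε : 0 < ε) {V : Type} [Fintype V]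
    [DecidableEq V] (G : SimpleGraph V) [DecidableRel G.Adj] (hG : G.EdgeDisjointTriangles)
    (hn : ⌊(triangleRemovalBound ε)⁻¹⌋₊ + 1 ≤ Fintype.card V) :
    ((G.cliqueFinset 3).card : ℝ) ≤ ε * (Fintype.card V : ℝ) ^ 2 := by
  by_contra! hlt
  have hb : 0 < triangleRemovalBound ε := by positivity
  have hpos : (0 : ℝ) < Fintype.card V := by
    have : 0 < Fintype.card V := by omega
    exact_mod_cast this
  have hfar : G.FarFromTriangleFree ε := hG.farFromTriangleFree (by push_cast; exact hlt.le)
  have h1 := hfar.le_card_cliqueFinset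
  have h2 : ((G.cliqueFinset 3).card : ℝ) ≤ (Fintype.card V : ℝ) ^ 2 := by
    have h3 := hG.card_edgeFinset_le
    have h4 := G.card_edgeFinset_le_card_choose_two
    have h5 := Nat.choose_le_pow (Fintype.card V) 2
    have : (G.cliqueFinset 3).card ≤ Fintype.card V ^ 2 := by omega
    exact_mod_cast this
  have h6 : (triangleRemovalBound ε)⁻¹ < Fintype.card V :=
    (Nat.lt_floor_add_one _).trans_le (by exact_mod_cast hn)
  have h7 : 1 < triangleRemovalBound ε * Fintype.card V := by
    rwa [inv_lt_iff_one_lt_mul₀' hb] at h6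
  have h8 : 0 < (Fintype.card V : ℝ) ^ 2 := by positivity
  nlinarith

/-- A triangle `abc` whose edges are covered by three doubled triangles, not all equal, is
rainbow. -/
lemma mulHasRainbow_of_doubled {V : Type*} [DecidableEq V] {𝒯 : Multiset (Finset V)}
    {a b c : V} {t₁ t₂ t₃ : Finset V} (hab : a ≠ b) (hac : a ≠ c) (hbc : b ≠ c)
    (h₁ : 2 ≤ 𝒯.count t₁) (h₂ : 2 ≤ 𝒯.count t₂) (h₃ : 2 ≤ 𝒯.count t₃)
    (hne : ¬ (t₁ = t₂ ∧ t₂ = t₃))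
    (ha₁ : a ∈ t₁) (hb₁ : b ∈ t₁) (ha₂ : a ∈ t₂) (hc₂ : c ∈ t₂) (hb₃ : b ∈ t₃) (hc₃ : c ∈ t₃) :
    MulHasRainbowTriangle 𝒯 := by
  refine ⟨{a, b, c}, {a, b}, {a, c}, {b, c}, t₁, t₂, t₃, Finset.card_eq_three.2
    ⟨a, b, c, hab, hac, hbc, rfl⟩, ?_, ?_, ?_, ?_, Finset.card_pair hab, Finset.card_pair hac,
    Finset.card_pair hbc, ?_, ?_, ?_, ?_, ?_, ?_⟩
  · rw [Multiset.le_iff_count]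
    intro t
    simp only [Multiset.insert_eq_cons, Multiset.count_cons, Multiset.count_singleton]
    -- `t` occurs at most twice among `t₁, t₂, t₃`
    grind
  · intro h
    have := Finset.ext_iff.1 h b
    grind
  · intro h
    have := Finset.ext_iff.1 h a
    grind
  · intro h
    have := Finset.ext_iff.1 h a
    grind
  all_goals grind

/-- For every `ε > 0` and all sufficiently large `n`, in a rainbow-triangle-free multiset
of triangles on `n` vertices, the number of distinct triangles of multiplicity at least 2
is at most `ε · n²`. -/
theorem doubled_triangles_subquadratic_of_no_rainbow_triangle :
    ∀ ε : ℝ, 0 < ε → ∃ N : ℕ, ∀ n : ℕ, N ≤ n →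
      ∀ (V : Type) [Fintype V] [DecidableEq V], Fintype.card V = n →
        ∀ 𝒯 : Multiset (Finset V),
          (∀ t ∈ 𝒯, t.card = 3) →
          ¬ MulHasRainbowTriangle 𝒯 →
          (((𝒯.toFinset.filter fun t => 2 ≤ 𝒯.count t).card : ℝ)) ≤ ε * (n : ℝ) ^ 2 := by
  classical
  intro ε hε
  refine ⟨⌊(SimpleGraph.triangleRemovalBound ε)⁻¹⌋₊ + 1, ?_⟩
  rintro n hn V _ _ rfl 𝒯 h𝒯 hno
  let G : SimpleGraph V :=
    { Adj := fun a b => a ≠ b ∧ ∃ t, 2 ≤ 𝒯.count t ∧ a ∈ t ∧ b ∈ t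
      symm := ⟨fun a b ⟨h, t, ht, ha, hb⟩ => ⟨h.symm, t, ht, hb, ha⟩⟩
      loopless := ⟨fun a h => h.1 rfl⟩ }
  have hcard : ∀ t, 2 ≤ 𝒯.count t → t.card = 3 := fun t ht =>
    h𝒯 t (Multiset.count_pos.1 (by omega))
  have hclique : ∀ s, G.IsNClique 3 s ↔ 2 ≤ 𝒯.count s := by
    intro s
    constructor
    · intro hs
      obtain ⟨a, b, c, ⟨hab, t₁, h₁, ha₁, hb₁⟩, ⟨hac, t₂, h₂, ha₂, hc₂⟩,
        ⟨hbc, t₃, h₃, hb₃, hc₃⟩, rfl⟩ := SimpleGraph.is3Clique_iff.1 hs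
      by_cases he : t₁ = t₂ ∧ t₂ = t₃
      · obtain ⟨rfl, rfl⟩ := he
        have : ({a, b, c} : Finset V) = t₁ :=
          Finset.eq_of_subset_of_card_le (by grind) (by rw [hcard _ h₁, hs.card_eq])
        rwa [this]
      · exact absurd (mulHasRainbow_of_doubled hab hac hbc h₁ h₂ h₃ he ha₁ hb₁ ha₂ hc₂ hb₃ hc₃) hno
    · intro hs
      exact ⟨fun a ha b hb hab => ⟨hab, s, hs, ha, hb⟩, hcard s hs⟩
  have hG : G.EdgeDisjointTriangles := by
    intro x hx y hy hxy a ha b hb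
    by_contra hab
    have hx2 := (hclique x).1 hx
    have hy2 := (hclique y).1 hy
    obtain ⟨c, hc, hcab⟩ : ∃ c ∈ x, c ∉ ({a, b} : Finset V) :=
      Finset.exists_mem_notMem_of_card_lt_card
        (Finset.card_le_two.trans_lt (by rw [hcard x hx2]; omega))
    simp only [Finset.mem_insert, Finset.mem_singleton, not_or] at hcab
    exact hno (mulHasRainbow_of_doubled hab (Ne.symm hcab.1) (Ne.symm hcab.2) hy2 hx2 hx2
      (fun h => hxy h.1.symm) ha.2 hb.2 ha.1 hc hb.1 hc)
  have heq : (𝒯.toFinset.filter fun t => 2 ≤ 𝒯.count t) = G.cliqueFinset 3 := by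
    ext t
    rw [Finset.mem_filter, SimpleGraph.mem_cliqueFinset_iff, hclique, Multiset.mem_toFinset]
    exact and_iff_right_of_imp fun h => Multiset.count_pos.1 (by omega)
  rw [heq]
  exact card_cliqueFinset_le_of_edgeDisjoint hε G hG hn
end

section
/- There exists a multiset 𝒯 of triangles on a set of 9 vertices with total size 12 counted with multiplicity (consisting of two copies of each of 6 pairwise edge-disjoint triangles) such that 𝒯 has no rainbow triangle with respect to 𝒯. In particular, 12 > 9²/8, so the n²/8 bound fails for multiset families when n = 9. -/
/-- The rows and columns of the `3 × 3` grid, whose point in row `i` and column `j` is the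
vertex `3 * i + j`. -/
def gridLines : Finset (Finset (Fin 9)) :=
  {{0, 1, 2}, {3, 4, 5}, {6, 7, 8}, {0, 3, 6}, {1, 4, 7}, {2, 5, 8}}

lemma gridLines_card : gridLines.card = 6 := by decide

lemma gridLines_card_eq_three : ∀ t ∈ gridLines, t.card = 3 := by decide +kernel

lemma gridLines_linear :
    ∀ t ∈ gridLines, ∀ t' ∈ gridLines, t ≠ t' → (t ∩ t').card ≤ 1 := by decide +kernel

/-- Among three pairwise intersecting grid lines, two coincide, since two of the three are
parallel. -/
lemma gridLines_pairwise_meet :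
    ∀ t₁ ∈ gridLines, ∀ t₂ ∈ gridLines, ∀ t₃ ∈ gridLines,
      (t₁ ∩ t₂).Nonempty → (t₁ ∩ t₃).Nonempty → (t₂ ∩ t₃).Nonempty →
      t₁ = t₂ ∨ t₁ = t₃ ∨ t₂ = t₃ := by
  decide +kernel

/-- Two edges of a triangle share a vertex. -/
lemma edges_inter_nonempty {s e e' : Finset (Fin 9)} (hs : s.card = 3)
    (he : e.card = 2) (he' : e'.card = 2) (h : e ⊆ s) (h' : e' ⊆ s) :
    (e ∩ e').Nonempty := by
  have h₁ := Finset.card_union_add_card_inter e e'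
  have h₂ := Finset.card_le_card (Finset.union_subset h h')
  rw [← Finset.card_pos]
  omega

/-- Two distinct edges of a triangle cover it. -/
lemma edges_union_eq {s e e' : Finset (Fin 9)} (hs : s.card = 3)
    (he : e.card = 2) (he' : e'.card = 2) (h : e ⊆ s) (h' : e' ⊆ s) (hne : e ≠ e') :
    e ∪ e' = s := by
  refine Finset.eq_of_subset_of_card_le (Finset.union_subset h h') ?_
  by_contra hlt
  -- A union of at most two vertices would equal both edges.
  have h₁ : e = e ∪ e' := Finset.eq_of_subset_of_card_le Finset.subset_union_left (by omega)
  have h₂ : e' = e ∪ e' := Finset.eq_of_subset_of_card_le Finset.subset_union_right (by omega)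
  exact hne (h₁.trans h₂.symm)

/-- If a grid line `t` contains two edges of a triangle, then any grid line `t'` containing
the third edge is `t` itself. -/
lemma eq_of_two_edges {s e₁ e₂ e₃ t t' : Finset (Fin 9)} (hs : s.card = 3)
    (c₁ : e₁.card = 2) (c₂ : e₂.card = 2) (c₃ : e₃.card = 2)
    (s₁ : e₁ ⊆ s) (s₂ : e₂ ⊆ s) (s₃ : e₃ ⊆ s) (hne : e₁ ≠ e₂)
    (ht : t ∈ gridLines) (ht' : t' ∈ gridLines)
    (h₁ : e₁ ⊆ t) (h₂ : e₂ ⊆ t) (h₃ : e₃ ⊆ t') : t = t' := by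
  by_contra hn
  have hst : s ⊆ t := by
    rw [← edges_union_eq hs c₁ c₂ s₁ s₂ hne]
    exact Finset.union_subset h₁ h₂
  have := Finset.card_le_card (Finset.subset_inter (s₃.trans hst) h₃)
  have := gridLines_linear t ht t' ht' hn
  omega

lemma not_three_copies (t : Finset (Fin 9)) :
    ¬ ({t, t, t} : Multiset (Finset (Fin 9))) ≤ gridLines.val + gridLines.val := by
  intro h
  have h₁ := Multiset.le_iff_count.1 h t
  have h₂ := Multiset.nodup_iff_count_le_one.1 gridLines.nodup t
  simp only [Multiset.insert_eq_cons, Multiset.count_cons_self, Multiset.count_singleton_self,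
    Multiset.count_add] at h₁
  omega

lemma gridLines_no_rainbow : ¬ MulHasRainbowTriangle (gridLines.val + gridLines.val) := by
  rintro ⟨s, e₁, e₂, e₃, t₁, t₂, t₃, hs, hle, n₁₂, n₁₃, n₂₃, c₁, c₂, c₃, s₁, s₂, s₃, h₁, h₂, h₃⟩
  have mem : ∀ t ∈ ({t₁, t₂, t₃} : Multiset (Finset (Fin 9))), t ∈ gridLines := fun t ht => by
    simpa using Multiset.mem_of_le hle ht
  have m₁ := mem t₁ (by simp)
  have m₂ := mem t₂ (by simp)
  have m₃ := mem t₃ (by simp)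
  rcases gridLines_pairwise_meet t₁ m₁ t₂ m₂ t₃ m₃
      ((edges_inter_nonempty hs c₁ c₂ s₁ s₂).mono (Finset.inter_subset_inter h₁ h₂))
      ((edges_inter_nonempty hs c₁ c₃ s₁ s₃).mono (Finset.inter_subset_inter h₁ h₃))
      ((edges_inter_nonempty hs c₂ c₃ s₂ s₃).mono (Finset.inter_subset_inter h₂ h₃))
    with rfl | rfl | rfl
  · obtain rfl := eq_of_two_edges hs c₁ c₂ c₃ s₁ s₂ s₃ n₁₂ m₁ m₃ h₁ h₂ h₃
    exact not_three_copies _ hle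
  · obtain rfl := eq_of_two_edges hs c₁ c₃ c₂ s₁ s₃ s₂ n₁₃ m₁ m₂ h₁ h₃ h₂
    exact not_three_copies _ hle
  · obtain rfl := eq_of_two_edges hs c₂ c₃ c₁ s₂ s₃ s₁ n₂₃ m₂ m₁ h₂ h₃ h₁
    exact not_three_copies _ hle

/-- On 9 vertices there is a rainbow-triangle-free multiset of 12 triangles (two copies of
each of 6 pairwise edge-disjoint triangles); in particular `12 > 9²/8`, so the `n²/8`
bound fails for multiset families when `n = 9`. -/
theorem exists_multiset_family_on_nine_vertices_no_rainbow_triangle :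
    (∃ 𝒯 : Multiset (Finset (Fin 9)),
      Multiset.card 𝒯 = 12 ∧
      (∀ t ∈ 𝒯, t.card = 3) ∧
      (∃ S : Finset (Finset (Fin 9)),
        S.card = 6 ∧
        (∀ t ∈ S, t.card = 3) ∧
        (∀ t ∈ S, ∀ t' ∈ S, t ≠ t' → (t ∩ t').card ≤ 1) ∧
        𝒯 = S.val + S.val) ∧
      ¬ MulHasRainbowTriangle 𝒯) ∧
    (12 : ℝ) > (9 : ℝ) ^ 2 / 8 := by
  refine ⟨⟨gridLines.val + gridLines.val, ?_, ?_, ⟨gridLines, gridLines_card,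
    gridLines_card_eq_three, gridLines_linear, rfl⟩, gridLines_no_rainbow⟩, by norm_num⟩
  · rw [Multiset.card_add, Finset.card_val, gridLines_card]
  · intro t ht
    exact gridLines_card_eq_three t (by simpa using ht)
end
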